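/- arXiv:1607.08716 — 3 statements merged into one kernel-verified Lean document; each statement's English description precedes it below -/
import Mathlib

section
/- Let Λ₀ = Mℤ^d ⊂ ℝ^d be a lattice of determinant one (|det M| = 1) and let u : Λ₀ → ℝ^d be a bounded function (there is C > 0 with |u(p)| ≤ C for all p ∈ Λ₀). Let Λ_u = {p + u(p) : p ∈ Λ₀}. Then lim_{α→0⁺} θ_{Λ_u}(α)/θ_{Λ₀}(α) = 1, where θ_{Λ_u}(α) = Σ_{p∈Λ₀} exp(−πα|p+u(p)|²) and θ_{Λ₀}(α) = Σ_{p∈Λ₀} exp(−πα|p|²). -/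
open scoped BigOperators

/-!
For `k = ⌊x / s⌋` the point `s • v k` is a step function of `x`, constant on cubes of volume
`s ^ n`, so `s ^ n • ∑ₖ f (s • v k)` is the integral over `ℝⁿ` of `f` along this step function.
If `v` is asymptotic to an injective linear map `A` on `ℤⁿ`, then as `s → 0⁺` the step function
tends pointwise to `A`, and it grows at least linearly in `x`, uniformly in `s ≤ 1`. Hence, when
`f y = O(‖y‖ ^ (-r))` with `r > n`, dominated convergence gives the limit `∫ f ∘ A`, which does not
depend on `v`. The ratio of theta functions is the quotient of two such sums, with
`f y = exp (-π ‖y‖ ^ 2)` and `s = √α`.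
-/

open MeasureTheory Filter Topology Asymptotics

section Decay

lemma rpow_neg_le_of_le_mul {a b B r : ℝ} (ha : 0 < a) (hb : 0 < b) (hr : 0 ≤ r)
    (hab : a ≤ B * b) : b ^ (-r) ≤ B ^ r * a ^ (-r) := by
  have hB : 0 < B := pos_of_mul_pos_left (ha.trans_le hab) hb.le
  calc b ^ (-r) = B ^ r * (B * b) ^ (-r) := by
        rw [Real.mul_rpow hB.le hb.le, ← mul_assoc, ← Real.rpow_add hB, add_neg_cancel,
          Real.rpow_zero, one_mul]
    _ ≤ B ^ r * a ^ (-r) := by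
        gcongr ?_ * ?_
        exact Real.rpow_le_rpow_of_nonpos ha hab (neg_nonpos.mpr hr)

/-- Since `log (1 + t) ≤ t`, it is enough that `r t ≤ c t ^ 2 + r ^ 2 / (4 c)`. -/
lemma norm_exp_neg_mul_norm_sq_le {E : Type*} [SeminormedAddCommGroup E] {c r : ℝ} (hc : 0 < c)
    (hr : 0 ≤ r) (y : E) :
    ‖Real.exp (-c * ‖y‖ ^ 2)‖ ≤ Real.exp (r ^ 2 / (4 * c)) * (1 + ‖y‖) ^ (-r) := by
  set t := ‖y‖
  have ht : 0 < 1 + t := by positivity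
  have hlog : Real.log (1 + t) ≤ t := by linarith [Real.log_le_sub_one_of_pos ht]
  have hsq : r * t ≤ c * t ^ 2 + r ^ 2 / (4 * c) := by
    have hdiff : c * t ^ 2 + r ^ 2 / (4 * c) - r * t = (2 * c * t - r) ^ 2 / (4 * c) := by
      field_simp
      ring
    exact sub_nonneg.mp (hdiff ▸ by positivity)
  rw [Real.norm_of_nonneg (Real.exp_nonneg _), Real.rpow_def_of_pos ht, ← Real.exp_add,
    Real.exp_le_exp]
  linarith [mul_le_mul_of_nonneg_right hlog hr]

variable {E F : Type*} [NormedAddCommGroup E] [NormedAddCommGroup F] {f : E → F} {B C r : ℝ}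

lemma norm_le_of_decay {X : Type*} [SeminormedAddCommGroup X] {x : X} {y : E}
    (hf : ∀ y, ‖f y‖ ≤ C * (1 + ‖y‖) ^ (-r)) (hr : 0 ≤ r) (hxy : 1 + ‖x‖ ≤ B * (1 + ‖y‖)) :
    ‖f y‖ ≤ C * B ^ r * (1 + ‖x‖) ^ (-r) := by
  have hC : 0 ≤ C := nonneg_of_mul_nonneg_left ((norm_nonneg _).trans (hf y)) (by positivity)
  rw [mul_assoc]
  refine (hf y).trans ?_
  gcongr
  exact rpow_neg_le_of_le_mul (by positivity) (by positivity) hr hxy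

lemma integrable_comp_of_decay {ι : Type*} [Fintype ι] {g : (ι → ℝ) → E}
    (hf : ∀ y, ‖f y‖ ≤ C * (1 + ‖y‖) ^ (-r)) (hr : Fintype.card ι < r)
    (hfg : AEStronglyMeasurable (f ∘ g)) (hg : ∀ x, 1 + ‖x‖ ≤ B * (1 + ‖g x‖)) :
    Integrable (f ∘ g) := by
  have hdom : Integrable fun x : ι → ℝ ↦ C * B ^ r * (1 + ‖x‖) ^ (-r) :=
    (integrable_one_add_norm (by rwa [Module.finrank_fintype_fun_eq_card])).const_mul _
  exact hdom.mono' hfg (.of_forall fun x ↦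
    norm_le_of_decay (y := g x) hf ((Nat.cast_nonneg _).trans hr.le) (hg x))

end Decay

section Floor

variable {ι : Type*} [Fintype ι]

/-- The coordinatewise floor `ℝⁿ → ℤⁿ`. -/
noncomputable def floorVec (x : ι → ℝ) : ι → ℤ := fun i ↦ ⌊x i⌋

lemma measurePreserving_floorVec :
    MeasurePreserving (floorVec : (ι → ℝ) → ι → ℤ) volume Measure.count := by
  have hmeas : Measurable (floorVec : (ι → ℝ) → ι → ℤ) :=
    measurable_pi_lambda _ fun i ↦ Int.measurable_floor.comp (measurable_pi_apply i)
  refine ⟨hmeas, Measure.ext_iff_singleton.mpr fun k ↦ ?_⟩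
  have hfibre : floorVec ⁻¹' {k} = Set.univ.pi fun i ↦ Set.Ico (k i : ℝ) (k i + 1) := by
    ext x
    simp [floorVec, funext_iff, Int.floor_eq_iff]
  rw [Measure.map_apply hmeas (measurableSet_singleton k), hfibre, volume_pi_pi,
    Measure.count_singleton]
  simp

lemma norm_intCast_floorVec_sub_le (x : ι → ℝ) : ‖(fun i ↦ (floorVec x i : ℝ)) - x‖ ≤ 1 := by
  refine (pi_norm_le_iff_of_nonneg zero_le_one).mpr fun i ↦ ?_
  rw [Pi.sub_apply, norm_sub_rev, Real.norm_eq_abs, floorVec, Int.self_sub_floor, Int.abs_fract]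
  exact (Int.fract_lt_one _).le

variable {F : Type*} [NormedAddCommGroup F] [NormedSpace ℝ F]

lemma integral_comp_floorVec_inv_smul [CompleteSpace F] {g : (ι → ℤ) → F} {s : ℝ} (hs : 0 < s)
    (hg : Integrable fun x ↦ g (floorVec (s⁻¹ • x))) :
    ∫ x, g (floorVec (s⁻¹ • x)) = s ^ Fintype.card ι • ∑' k, g k := by
  have hcount : Integrable g Measure.count := by
    rw [← measurePreserving_floorVec.integrable_comp .of_discrete]
    exact (integrable_comp_smul_iff volume (fun x ↦ g (floorVec x)) (inv_ne_zero hs.ne')).mp hg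
  calc ∫ x, g (floorVec (s⁻¹ • x))
      = s ^ Fintype.card ι • ∫ x : ι → ℝ, g (floorVec x) := by
        rw [Measure.integral_comp_inv_smul_of_nonneg volume (fun x ↦ g (floorVec x)) hs.le,
          Module.finrank_fintype_fun_eq_card]
    _ = s ^ Fintype.card ι • ∫ k, g k ∂Measure.count := by
        rw [← measurePreserving_floorVec.map_eq, integral_map
          measurePreserving_floorVec.aemeasurable .of_discrete]
    _ = s ^ Fintype.card ι • ∑' k, g k := by
        rw [integral_countable hcount]
        simp [Measure.real]

end Floor

section ScaledStep

variable {ι E : Type*} [NormedAddCommGroup E] [NormedSpace ℝ E] {v w : (ι → ℤ) → E}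

/-- The step function on `ℝⁿ` whose value on the cube `s • (k + [0, 1)ⁿ)` is `s • v k`. -/
noncomputable def scaledStep (v : (ι → ℤ) → E) (s : ℝ) (x : ι → ℝ) : E :=
  s • v (floorVec (s⁻¹ • x))

lemma norm_scaledStep_sub_le {ε D : ℝ} (h : ∀ k, ‖v k - w k‖ ≤ ε * ‖w k‖ + D) {s : ℝ}
    (hs : 0 ≤ s) (x : ι → ℝ) :
    ‖scaledStep v s x - scaledStep w s x‖ ≤ ε * ‖scaledStep w s x‖ + s * D := by
  set k := floorVec (s⁻¹ • x)
  calc ‖scaledStep v s x - scaledStep w s x‖ = s * ‖v k - w k‖ := by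
        rw [scaledStep, scaledStep, ← smul_sub, norm_smul, Real.norm_of_nonneg hs]
    _ ≤ s * (ε * ‖w k‖ + D) := by gcongr; exact h k
    _ = ε * ‖scaledStep w s x‖ + s * D := by
        rw [scaledStep, norm_smul, Real.norm_of_nonneg hs]
        ring

end ScaledStep

section Asymptotic

lemma exists_norm_le_mul_norm_add_of_isLittleO_cofinite {X G H : Type*}
    [SeminormedAddCommGroup G] [SeminormedAddCommGroup H] {g : X → G} {h : X → H}
    (hgh : g =o[cofinite] h) {ε : ℝ} (hε : 0 < ε) : ∃ D, 0 ≤ D ∧ ∀ x, ‖g x‖ ≤ ε * ‖h x‖ + D := by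
  obtain ⟨D, hD⟩ := ((eventually_cofinite.mp (hgh.def hε)).image (‖g ·‖)).bddAbove
  refine ⟨max D 0, le_max_right _ _, fun x ↦ ?_⟩
  by_cases hx : ‖g x‖ ≤ ε * ‖h x‖
  · exact hx.trans (le_add_of_nonneg_right (le_max_right _ _))
  · have hgD : ‖g x‖ ≤ D := hD (Set.mem_image_of_mem (‖g ·‖) hx)
    exact (hgD.trans (le_max_left _ _)).trans (le_add_of_nonneg_left (by positivity))

variable {ι E : Type*} [NormedAddCommGroup E] [NormedSpace ℝ E]
  {A : (ι → ℝ) →L[ℝ] E} {v : (ι → ℤ) → E}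

/-- The point with integer coordinates `k` of the lattice `A ℤⁿ`. -/
def latticePoint (A : (ι → ℝ) →L[ℝ] E) (k : ι → ℤ) : E := A fun i ↦ (k i : ℝ)

lemma norm_scaledStep_latticePoint_sub_le [Fintype ι] (A : (ι → ℝ) →L[ℝ] E) {s : ℝ}
    (hs : 0 < s) (x : ι → ℝ) : ‖scaledStep (latticePoint A) s x - A x‖ ≤ s * ‖A‖ := by
  set y := s⁻¹ • x with hy
  have hx : A x = s • A y := by rw [← map_smul, hy, smul_inv_smul₀ hs.ne']
  rw [hx, scaledStep, latticePoint, ← smul_sub, ← map_sub, norm_smul, Real.norm_of_nonneg hs.le]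
  gcongr
  exact A.le_of_opNorm_le_of_le le_rfl (norm_intCast_floorVec_sub_le y) |>.trans_eq (mul_one _)

lemma isLittleO_latticePoint_of_norm_le [Finite ι] {G : Type*} [SeminormedAddCommGroup G]
    {g : (ι → ℤ) → G} {C : ℝ} (hA : Function.Injective A) (hg : ∀ k, ‖g k‖ ≤ C) :
    g =o[cofinite] latticePoint A := by
  have := Fintype.ofFinite ι
  obtain ⟨K, -, hK⟩ := A.toLinearMap.exists_antilipschitzWith (LinearMap.ker_eq_bot.mpr hA)
  have hcast : Tendsto (fun k : ι → ℤ ↦ ‖fun i ↦ (k i : ℝ)‖) cofinite atTop :=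
    tendsto_norm_comp_cofinite_atTop_of_isClosedEmbedding
      (.piMap fun _ ↦ Int.isClosedEmbedding_coe_real)
  calc g =O[cofinite] fun _ ↦ C := .of_norm_le hg
    _ =o[cofinite] fun k i ↦ (k i : ℝ) := isLittleO_const_left.mpr (.inr hcast)
    _ =O[cofinite] latticePoint A := isBigO_of_le' _ fun _ ↦ hK.le_mul_norm (map_zero A) _

lemma tendsto_scaledStep_latticePoint [Finite ι] (A : (ι → ℝ) →L[ℝ] E) (x : ι → ℝ) :
    Tendsto (scaledStep (latticePoint A) · x) (𝓝[>] 0) (𝓝 (A x)) := by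
  have := Fintype.ofFinite ι
  have hid : Tendsto (fun s : ℝ ↦ s) (𝓝[>] 0) (𝓝 0) := nhdsWithin_le_nhds
  refine tendsto_iff_norm_sub_tendsto_zero.mpr (squeeze_zero' (.of_forall fun _ ↦ norm_nonneg _)
    (eventually_mem_nhdsWithin.mono fun s hs ↦ norm_scaledStep_latticePoint_sub_le A hs x) ?_)
  simpa only [zero_mul] using hid.mul_const ‖A‖

lemma tendsto_scaledStep [Finite ι] (hv : v ~[cofinite] latticePoint A) (x : ι → ℝ) :
    Tendsto (scaledStep v · x) (𝓝[>] 0) (𝓝 (A x)) := by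
  have hid : Tendsto (fun s : ℝ ↦ s) (𝓝[>] 0) (𝓝 0) := nhdsWithin_le_nhds
  have hlattice := tendsto_scaledStep_latticePoint A x
  suffices hdiff : Tendsto (fun s ↦ scaledStep v s x - scaledStep (latticePoint A) s x)
      (𝓝[>] 0) (𝓝 0) by
    simpa only [sub_add_cancel, zero_add] using hdiff.add hlattice
  refine NormedAddGroup.tendsto_nhds_zero.mpr fun ε hε ↦ ?_
  obtain ⟨δ, hδ, hδε⟩ := exists_pos_mul_lt hε ‖A x‖
  obtain ⟨D, -, hD⟩ := exists_norm_le_mul_norm_add_of_isLittleO_cofinite hv.isLittleO hδ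
  have hbound : Tendsto (fun s ↦ δ * ‖scaledStep (latticePoint A) s x‖ + s * D) (𝓝[>] 0)
      (𝓝 (‖A x‖ * δ)) := by
    simpa only [zero_mul, add_zero, mul_comm ‖A x‖ δ] using
      (hlattice.norm.const_mul δ).add (hid.mul_const D)
  filter_upwards [hbound.eventually_lt_const hδε, self_mem_nhdsWithin] with s hsε hs
  exact (norm_scaledStep_sub_le hD (le_of_lt hs) x).trans_lt hsε

lemma exists_one_add_norm_le_map [Fintype ι] (hA : Function.Injective A) :
    ∃ B, 0 ≤ B ∧ ∀ x, 1 + ‖x‖ ≤ B * (1 + ‖A x‖) := by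
  obtain ⟨K, -, hK⟩ := A.toLinearMap.exists_antilipschitzWith (LinearMap.ker_eq_bot.mpr hA)
  refine ⟨1 + K, by positivity, fun x ↦ ?_⟩
  have hx : ‖x‖ ≤ K * ‖A x‖ := hK.le_mul_norm (map_zero A) x
  nlinarith [norm_nonneg (A x), K.coe_nonneg]

lemma exists_one_add_norm_le_scaledStep [Fintype ι] (hA : Function.Injective A)
    (hv : v ~[cofinite] latticePoint A) :
    ∃ B, ∀ s, 0 < s → s ≤ 1 → ∀ x, 1 + ‖x‖ ≤ B * (1 + ‖scaledStep v s x‖) := by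
  obtain ⟨B, hB, hAB⟩ := exists_one_add_norm_le_map hA
  obtain ⟨D, hD, hvD⟩ :=
    exists_norm_le_mul_norm_add_of_isLittleO_cofinite hv.isLittleO (half_pos one_pos)
  refine ⟨B * (2 + 2 * D + ‖A‖), fun s hs hs1 x ↦ (hAB x).trans ?_⟩
  rw [mul_assoc]
  gcongr
  set p := scaledStep v s x
  set q := scaledStep (latticePoint A) s x
  have hpq : ‖p - q‖ ≤ 1 / 2 * ‖q‖ + D :=
    (norm_scaledStep_sub_le hvD hs.le x).trans (by gcongr; exact mul_le_of_le_one_left hD hs1)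
  have hqA : ‖q - A x‖ ≤ ‖A‖ := (norm_scaledStep_latticePoint_sub_le A hs x).trans
    (mul_le_of_le_one_left (norm_nonneg A) hs1)
  have hq : ‖q‖ ≤ ‖p‖ + ‖p - q‖ := norm_le_norm_add_norm_sub p q
  have hAx : ‖A x‖ ≤ ‖q‖ + ‖q - A x‖ := norm_le_norm_add_norm_sub q (A x)
  calc 1 + ‖A x‖ ≤ 1 + 2 * ‖p‖ + 2 * D + ‖A‖ := by linarith
    _ ≤ (2 + 2 * D + ‖A‖) * (1 + ‖p‖) := by nlinarith [norm_nonneg p, norm_nonneg A]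

variable {F : Type*} [NormedAddCommGroup F] {f : E → F} {C r : ℝ}

lemma stronglyMeasurable_comp_scaledStep [Finite ι] (f : E → F) (v : (ι → ℤ) → E) (s : ℝ) :
    StronglyMeasurable (f ∘ scaledStep v s) :=
  have := Fintype.ofFinite ι
  (StronglyMeasurable.of_discrete (f := fun k ↦ f (s • v k))).comp_measurable
    (measurePreserving_floorVec.measurable.comp (measurable_const_smul s⁻¹))

theorem tendsto_pow_smul_tsum_comp_smul [Fintype ι] [NormedSpace ℝ F] [CompleteSpace F]
    (hA : Function.Injective A) (hv : v ~[cofinite] latticePoint A) (hcont : Continuous f)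
    (hf : ∀ y, ‖f y‖ ≤ C * (1 + ‖y‖) ^ (-r)) (hr : Fintype.card ι < r) :
    Tendsto (fun s : ℝ ↦ s ^ Fintype.card ι • ∑' k, f (s • v k)) (𝓝[>] 0)
      (𝓝 (∫ x, f (A x))) := by
  obtain ⟨B, hB⟩ := exists_one_add_norm_le_scaledStep hA hv
  have hsmall : ∀ᶠ s : ℝ in 𝓝[>] 0, 0 < s ∧ s ≤ 1 := Ioc_mem_nhdsGT one_pos
  have hlim : Tendsto (fun s ↦ ∫ x, f (scaledStep v s x)) (𝓝[>] 0) (𝓝 (∫ x, f (A x))) := by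
    refine tendsto_integral_filter_of_dominated_convergence
      (fun x ↦ C * B ^ r * (1 + ‖x‖) ^ (-r)) ?_ ?_ ?_ ?_
    · exact .of_forall fun s ↦ (stronglyMeasurable_comp_scaledStep f v s).aestronglyMeasurable
    · exact hsmall.mono fun s hs ↦ .of_forall fun x ↦
        norm_le_of_decay hf ((Nat.cast_nonneg _).trans hr.le) (hB s hs.1 hs.2 x)
    · exact (integrable_one_add_norm (by rwa [Module.finrank_fintype_fun_eq_card])).const_mul _
    · exact .of_forall fun x ↦ (hcont.tendsto _).comp (tendsto_scaledStep hv x)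
  refine hlim.congr' (hsmall.mono fun s hs ↦ ?_)
  exact integral_comp_floorVec_inv_smul (g := fun k ↦ f (s • v k)) hs.1
    (integrable_comp_of_decay hf hr (stronglyMeasurable_comp_scaledStep f v s).aestronglyMeasurable
      (hB s hs.1 hs.2))

end Asymptotic

section Theta

variable {ι E : Type*} [NormedAddCommGroup E] [NormedSpace ℝ E]
  {A : (ι → ℝ) →L[ℝ] E} {v w : (ι → ℤ) → E}

lemma tendsto_sqrt_pow_mul_tsum_exp [Fintype ι] (hA : Function.Injective A)
    (hv : v ~[cofinite] latticePoint A) :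
    Tendsto (fun α ↦ √α ^ Fintype.card ι * ∑' k, Real.exp (-Real.pi * α * ‖v k‖ ^ 2)) (𝓝[>] 0)
      (𝓝 (∫ x, Real.exp (-Real.pi * ‖A x‖ ^ 2))) := by
  have hsqrt : Tendsto (√·) (𝓝[>] 0) (𝓝[>] 0) :=
    tendsto_nhdsWithin_of_tendsto_nhds_of_eventually_within _
      ((Real.continuous_sqrt.tendsto' 0 0 Real.sqrt_zero).mono_left nhdsWithin_le_nhds)
      (eventually_mem_nhdsWithin.mono fun _ ↦ Real.sqrt_pos.mpr)
  have hlim := tendsto_pow_smul_tsum_comp_smul (f := fun y ↦ Real.exp (-Real.pi * ‖y‖ ^ 2)) hA hv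
    (by fun_prop) (norm_exp_neg_mul_norm_sq_le Real.pi_pos (by positivity)) (lt_add_one _)
  refine (hlim.comp hsqrt).congr' ?_
  filter_upwards [self_mem_nhdsWithin] with α hα
  have hterm (k : ι → ℤ) : ‖√α • v k‖ ^ 2 = α * ‖v k‖ ^ 2 := by
    rw [norm_smul, mul_pow, Real.norm_of_nonneg (Real.sqrt_nonneg α), Real.sq_sqrt (le_of_lt hα)]
  simp only [Function.comp_apply, smul_eq_mul, hterm, mul_assoc]

lemma integral_exp_neg_pi_mul_norm_sq_pos [Fintype ι] (hA : Function.Injective A) :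
    0 < ∫ x, Real.exp (-Real.pi * ‖A x‖ ^ 2) := by
  obtain ⟨B, -, hB⟩ := exists_one_add_norm_le_map hA
  exact integral_exp_pos <| integrable_comp_of_decay (f := fun y ↦ Real.exp (-Real.pi * ‖y‖ ^ 2))
    (norm_exp_neg_mul_norm_sq_le Real.pi_pos (by positivity)) (lt_add_one _)
    (Continuous.aestronglyMeasurable (by fun_prop)) hB

theorem tendsto_tsum_exp_div_tsum_exp [Finite ι] (hA : Function.Injective A)
    (hv : v ~[cofinite] latticePoint A) (hw : w ~[cofinite] latticePoint A) :
    Tendsto (fun α ↦ (∑' k, Real.exp (-Real.pi * α * ‖v k‖ ^ 2)) /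
      ∑' k, Real.exp (-Real.pi * α * ‖w k‖ ^ 2)) (𝓝[>] 0) (𝓝 1) := by
  have := Fintype.ofFinite ι
  have hpos := integral_exp_neg_pi_mul_norm_sq_pos hA
  have hratio := (tendsto_sqrt_pow_mul_tsum_exp hA hv).div
    (tendsto_sqrt_pow_mul_tsum_exp hA hw) hpos.ne'
  rw [div_self hpos.ne'] at hratio
  refine hratio.congr' ?_
  filter_upwards [self_mem_nhdsWithin] with α hα
  exact mul_div_mul_left _ _ (pow_pos (Real.sqrt_pos.mpr hα) _).ne'

end Theta

section Matrix

variable {ι : Type*} [Fintype ι]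

/-- The linear map `M`, with values in Euclidean space so that the norm of a lattice point is its
Euclidean length. -/
noncomputable def euclideanMulVec (M : Matrix ι ι ℝ) : (ι → ℝ) →L[ℝ] EuclideanSpace ℝ ι :=
  (EuclideanSpace.equiv ι ℝ).symm.toContinuousLinearMap ∘L M.mulVecLin.toContinuousLinearMap

variable [DecidableEq ι] {M : Matrix ι ι ℝ}

lemma injective_euclideanMulVec (hM : M.det ≠ 0) : Function.Injective (euclideanMulVec M) :=
  (EuclideanSpace.equiv ι ℝ).symm.injective.comp
    (Matrix.mulVec_injective_of_isUnit ((Matrix.isUnit_iff_isUnit_det M).mpr hM.isUnit))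

theorem perturbed_theta_ratio_tendsto_one_general (hM : M.det ≠ 0) {u : (ι → ℝ) → (ι → ℝ)}
    (hu : (fun k : ι → ℤ ↦ WithLp.toLp 2 (u (M.mulVec fun j ↦ (k j : ℝ)))) =o[cofinite]
      fun k ↦ WithLp.toLp 2 (M.mulVec fun j ↦ (k j : ℝ))) :
    Tendsto (fun α : ℝ ↦
        (∑' k : ι → ℤ, Real.exp (-Real.pi * α * ∑ i,
          (M.mulVec (fun j ↦ (k j : ℝ)) i + u (M.mulVec (fun j ↦ (k j : ℝ))) i) ^ 2)) /
        ∑' k : ι → ℤ, Real.exp (-Real.pi * α * ∑ i, (M.mulVec (fun j ↦ (k j : ℝ)) i) ^ 2))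
      (𝓝[>] 0) (𝓝 1) := by
  have hv : (fun k : ι → ℤ ↦ WithLp.toLp 2
      (M.mulVec (fun j ↦ (k j : ℝ)) + u (M.mulVec fun j ↦ (k j : ℝ)))) ~[cofinite]
      latticePoint (euclideanMulVec M) :=
    IsEquivalent.refl.add_isLittleO hu
  simpa only [EuclideanSpace.real_norm_sq_eq, Pi.add_apply] using
    tendsto_tsum_exp_div_tsum_exp (injective_euclideanMulVec hM) hv
      (w := fun k ↦ WithLp.toLp 2 (M.mulVec fun j ↦ (k j : ℝ))) .refl

end Matrix

/-- for a unit-determinant lattice `Λ₀ = Mℤ^d` and a bounded perturbation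
`u : Λ₀ → ℝ^d`, the ratio `θ_{Λ_u}(α)/θ_{Λ₀}(α)` tends to `1` as `α → 0⁺`, where
`θ_{Λ_u}(α) = Σ_{k∈ℤ^d} exp(−πα|Mk + u(Mk)|²)`. -/
theorem perturbed_theta_ratio_tendsto_one
    (d : ℕ) (M : Matrix (Fin d) (Fin d) ℝ) (hdet : |M.det| = 1)
    (u : (Fin d → ℝ) → (Fin d → ℝ)) (C : ℝ) (hC : 0 < C)
    (hu : ∀ k : Fin d → ℤ,
      Real.sqrt (∑ i, (u (M.mulVec (fun j => (k j : ℝ))) i) ^ 2) ≤ C) :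
    Filter.Tendsto (fun α : ℝ =>
        (∑' k : Fin d → ℤ,
            Real.exp (-Real.pi * α * ∑ i,
              (M.mulVec (fun j => (k j : ℝ)) i
                + u (M.mulVec (fun j => (k j : ℝ))) i) ^ 2))
        / (∑' k : Fin d → ℤ,
            Real.exp (-Real.pi * α * ∑ i, (M.mulVec (fun j => (k j : ℝ)) i) ^ 2)))
      (nhdsWithin 0 (Set.Ioi 0)) (nhds 1) := by
  have hM : M.det ≠ 0 := abs_ne_zero.mp (hdet ▸ one_ne_zero)
  exact perturbed_theta_ratio_tendsto_one_general hM <|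
    isLittleO_latticePoint_of_norm_le (injective_euclideanMulVec hM) fun k ↦ by
      simpa [EuclideanSpace.norm_eq] using hu k
end

section
/- For t > 0, α > 0 and y > 0 define E_t(y;α) = θ₃(t²α)·θ₃(yα)·θ₃(α/y) + θ₂(t²α)·θ₂(yα)·θ₂(α/y), which equals the theta function θ_{L_{y,t}}(α) of the body-centred-orthorhombic lattice L_{y,t}. Then for every t > 0 and α > 0 the function y ↦ E_t(y;α) is strictly increasing on [√3, +∞). Consequently, any minimizer of y ↦ E_t(y;α) over [1,+∞) belongs to the interval [1, √3]. -/
/-!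
With `a = θ₂(t²α)` and `b = θ₃(t²α)`, one has `0 < a < b` and `E_t = a F + (b - a) R`, where
`R(y) = θ₃(yα)θ₃(α/y)` and `F(y) = θ₃(yα)θ₃(α/y) + θ₂(yα)θ₂(α/y)` are the theta functions of the
rectangular and of the rhombic lattice of aspect ratio `y`. Hence it suffices that `R` increases
strictly on `[1, ∞)` and `F` on `[√3, ∞)`.

Both lattices are similar to their duals, which gives `R(y; 1/α) = α R(y; α)` and
`F(y; 4/α) = (α/2) F(y; α)`. Thus only `α ≥ 1`, respectively `α ≥ 2`, matters, where the theta
series are governed by their leading terms.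

The variation `y² ∂/∂y` vanishes on `R` at the square lattice `y = 1`, by symmetry, and on `F` at
the hexagonal lattice `y = √3`, because of its rotation of order three. The derivative of this
variation is a double sum of squares, weighted by Gaussians, minus terms of first order. The
latter vanish on the row of lattice points through the origin in the short direction, and the
squares of that row alone, `(α/y)² θ₃''(α/y)`, outweigh them.
-/

open scoped BigOperators

/-- The classical Jacobi theta function `θ₂(x) = Σ_{k∈ℤ} e^{−π(k+1/2)²x}`. -/
noncomputable def theta2 (x : ℝ) : ℝ :=
  ∑' n : ℤ, Real.exp (-Real.pi * ((n : ℝ) + 1 / 2) ^ 2 * x)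

/-- The classical Jacobi theta function `θ₃(x) = Σ_{k∈ℤ} e^{−πk²x}`. -/
noncomputable def theta3 (x : ℝ) : ℝ :=
  ∑' n : ℤ, Real.exp (-Real.pi * (n : ℝ) ^ 2 * x)

/-- The theta function `E_t(y;α) = θ_{L_{y,t}}(α)` of the body-centred-orthorhombic
lattice `L_{y,t}`. -/
noncomputable def Et (t α y : ℝ) : ℝ :=
  theta3 (t ^ 2 * α) * theta3 (y * α) * theta3 (α / y)
    + theta2 (t ^ 2 * α) * theta2 (y * α) * theta2 (α / y)

open Real Set

/-! ### Moments of theta series -/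

/-- The `j`-th moment `(πu²)ʲ e^{-πu²x}` of a Gaussian: differentiating it in `x` raises `j` by one
and changes the sign. -/
noncomputable def thetaTerm (j : ℕ) (x u : ℝ) : ℝ :=
  (π * u ^ 2) ^ j * exp (-π * u ^ 2 * x)

lemma thetaTerm_nonneg (j : ℕ) (x u : ℝ) : 0 ≤ thetaTerm j x u := by
  unfold thetaTerm
  positivity

lemma thetaTerm_pos (j : ℕ) (x : ℝ) {u : ℝ} (hu : u ≠ 0) : 0 < thetaTerm j x u := by
  unfold thetaTerm
  positivity

lemma thetaTerm_neg (j : ℕ) (x u : ℝ) : thetaTerm j x (-u) = thetaTerm j x u := by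
  simp only [thetaTerm, neg_sq]

lemma thetaTerm_zero_right (j : ℕ) (x : ℝ) : thetaTerm j x 0 = 0 ^ j := by
  simp [thetaTerm]

lemma thetaTerm_succ (j : ℕ) (x u : ℝ) :
    thetaTerm (j + 1) x u = π * u ^ 2 * thetaTerm j x u := by
  unfold thetaTerm
  ring

lemma thetaTerm_antitone (j : ℕ) (u : ℝ) : Antitone fun x => thetaTerm j x u := by
  intro x y hxy
  refine mul_le_mul_of_nonneg_left (exp_le_exp.2 ?_) (by positivity)
  have : 0 ≤ π * u ^ 2 := by positivity
  nlinarith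

lemma hasDerivAt_thetaTerm (j : ℕ) (x u : ℝ) :
    HasDerivAt (fun z => thetaTerm j z u) (-thetaTerm (j + 1) x u) x := by
  have h := (((hasDerivAt_id x).const_mul (-π * u ^ 2)).exp).const_mul ((π * u ^ 2) ^ j)
  refine h.congr_deriv ?_
  simp only [thetaTerm, id]
  ring

/-- The moment series `∑ₙ (π(n+s)²)ʲ e^{-π(n+s)²x}` over `n ∈ ℤ`. For `j = 0` the shifts `s = 0` and
`s = 1/2` give `θ₃` and `θ₂`, and the moments `j > 0` are their derivatives up to sign. -/
noncomputable def thetaMoment (s : ℝ) (j : ℕ) (x : ℝ) : ℝ :=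
  ∑' n : ℤ, thetaTerm j x (n + s)

lemma thetaMoment_zero_zero : thetaMoment 0 0 = theta3 := by
  ext x
  simp [thetaMoment, thetaTerm, theta3]

lemma thetaMoment_half_zero : thetaMoment (1 / 2) 0 = theta2 := by
  ext x
  simp [thetaMoment, thetaTerm, theta2]

lemma summable_thetaTerm (s : ℝ) (j : ℕ) {x : ℝ} (hx : 0 < x) :
    Summable fun n : ℤ => thetaTerm j x (n + s) := by
  refine ((HurwitzKernelBounds.summable_f_int (2 * j) s hx).mul_left (π ^ j)).congr fun n => ?_
  rw [HurwitzKernelBounds.f_int, thetaTerm, mul_pow, pow_mul |(n : ℝ) + s|, sq_abs]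
  ring

lemma hasSum_thetaMoment (s : ℝ) (j : ℕ) {x : ℝ} (hx : 0 < x) :
    HasSum (fun n : ℤ => thetaTerm j x (n + s)) (thetaMoment s j x) :=
  (summable_thetaTerm s j hx).hasSum

lemma hasSum_thetaMoment_mul (s : ℝ) (i j : ℕ) {x y : ℝ} (hx : 0 < x) (hy : 0 < y) :
    HasSum (fun p : ℤ × ℤ => thetaTerm i x (p.1 + s) * thetaTerm j y (p.2 + s))
      (thetaMoment s i x * thetaMoment s j y) :=
  (hasSum_thetaMoment s i hx).mul (hasSum_thetaMoment s j hy)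
    ((summable_thetaTerm s i hx).mul_of_nonneg (summable_thetaTerm s j hy)
      (fun _ => thetaTerm_nonneg _ _ _) (fun _ => thetaTerm_nonneg _ _ _))

lemma thetaMoment_nonneg (s : ℝ) (j : ℕ) (x : ℝ) : 0 ≤ thetaMoment s j x :=
  tsum_nonneg fun _ => thetaTerm_nonneg _ _ _

lemma hasDerivAt_thetaMoment (s : ℝ) (j : ℕ) {x : ℝ} (hx : 0 < x) :
    HasDerivAt (thetaMoment s j) (-thetaMoment s (j + 1) x) x := by
  have hx2 : 0 < x / 2 := by positivity
  have hmem : x ∈ Ioi (x / 2) := half_lt_self hx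
  have h := hasDerivAt_tsum_of_isPreconnected (summable_thetaTerm s (j + 1) hx2)
    isOpen_Ioi isPreconnected_Ioi (fun n z _ => hasDerivAt_thetaTerm j z (n + s)) ?_ hmem
    (summable_thetaTerm s j hx) hmem
  · rwa [tsum_neg] at h
  · intro n z hz
    rw [norm_neg, norm_of_nonneg (thetaTerm_nonneg _ _ _)]
    exact thetaTerm_antitone _ _ (le_of_lt hz)

/-! ### Functional equations -/

lemma hasSum_of_bijective_sumElim {ι κ κ' : Type*} {f : ι → ℝ} {i : κ → ι} {j : κ' → ι} {a b : ℝ}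
    (hij : Function.Bijective (Sum.elim i j)) (hi : HasSum (f ∘ i) a) (hj : HasSum (f ∘ j) b) :
    HasSum f (a + b) :=
  (Equiv.ofBijective _ hij).hasSum_iff.1 (HasSum.sum (f := f ∘ Sum.elim i j) hi hj)

lemma bijective_sumElim_even_odd :
    Function.Bijective (Sum.elim (fun n : ℤ => 2 * n) fun n => 2 * n + 1) := by
  constructor
  · rintro (m | m) (n | n) h <;> simp only [Sum.elim_inl, Sum.elim_inr] at h <;> grind
  · intro k
    obtain ⟨n, rfl | rfl⟩ := Int.even_or_odd' k
    exacts [⟨.inl n, rfl⟩, ⟨.inr n, rfl⟩]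

lemma theta3_eq_add_four_mul {x : ℝ} (hx : 0 < x) :
    theta3 x = theta3 (4 * x) + theta2 (4 * x) := by
  simp only [← thetaMoment_zero_zero, ← thetaMoment_half_zero]
  refine (hasSum_of_bijective_sumElim bijective_sumElim_even_odd
    ((hasSum_thetaMoment 0 0 (x := 4 * x) (by positivity)).congr_fun fun n => ?_)
    ((hasSum_thetaMoment (1 / 2) 0 (x := 4 * x) (by positivity)).congr_fun fun n => ?_)).tsum_eq <;>
  · simp only [Function.comp_apply, thetaTerm]
    push_cast
    ring_nf

lemma theta3_one_div {x : ℝ} (hx : 0 < x) : theta3 (1 / x) = √x * theta3 x := by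
  have h := tsum_exp_neg_mul_int_sq hx
  have hl : ∑' n : ℤ, exp (-π * x * (n : ℝ) ^ 2) = theta3 x :=
    tsum_congr fun n => by ring_nf
  have hr : ∑' n : ℤ, exp (-π / x * (n : ℝ) ^ 2) = theta3 (1 / x) :=
    tsum_congr fun n => by ring_nf
  rw [hl, hr, ← sqrt_eq_rpow] at h
  rw [h]
  field_simp

lemma theta3_four_div {x : ℝ} (hx : 0 < x) :
    theta3 (4 / x) = √x / 2 * (theta3 x + theta2 x) := by
  have hsplit := theta3_eq_add_four_mul (x := x / 4) (by positivity)
  have hinv := theta3_one_div (x := x / 4) (by positivity)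
  have hsqrt : √(x / 4) = √x / 2 := by
    rw [sqrt_div hx.le, show (4 : ℝ) = 2 ^ 2 by norm_num, sqrt_sq zero_le_two]
  rwa [hsplit, hsqrt, one_div_div, mul_div_cancel₀ x four_ne_zero] at hinv

lemma theta2_four_div {x : ℝ} (hx : 0 < x) :
    theta2 (4 / x) = √x / 2 * (theta3 x - theta2 x) := by
  have hsplit := theta3_eq_add_four_mul (x := 1 / x) (by positivity)
  rw [mul_one_div, theta3_four_div hx, theta3_one_div hx] at hsplit
  linarith

lemma theta2_pos {x : ℝ} (hx : 0 < x) : 0 < theta2 x := by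
  rw [← thetaMoment_half_zero]
  exact (summable_thetaTerm (1 / 2) 0 hx).tsum_pos (fun _ => thetaTerm_nonneg _ _ _) 0
    (thetaTerm_pos _ _ (by norm_num))

lemma theta2_lt_theta3 {x : ℝ} (hx : 0 < x) : theta2 x < theta3 x := by
  have h := theta2_pos (x := 4 / x) (by positivity)
  rw [theta2_four_div hx] at h
  exact sub_pos.1 (pos_of_mul_pos_right h (by positivity))

/-! ### Rectangular and rhombic lattices -/

/-- The theta function, at `α`, of the rectangular lattice `√y ℤ × (1/√y) ℤ` of aspect ratio `y`
whose two coordinates are translated by the fraction `s` of their periods. -/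
noncomputable def rectTheta (s α y : ℝ) : ℝ :=
  thetaMoment s 0 (y * α) * thetaMoment s 0 (α / y)

/-- The theta function of the centred rectangular (rhombic) lattice of aspect ratio `y`; the
hexagonal lattice is `y = √3`. -/
noncomputable def rhombTheta (α y : ℝ) : ℝ :=
  rectTheta 0 α y + rectTheta (1 / 2) α y

lemma Et_eq_rhombTheta_add_rectTheta (t α y : ℝ) :
    Et t α y = theta2 (t ^ 2 * α) * rhombTheta α y
      + (theta3 (t ^ 2 * α) - theta2 (t ^ 2 * α)) * rectTheta 0 α y := by
  simp only [Et, rhombTheta, rectTheta, thetaMoment_zero_zero, thetaMoment_half_zero]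
  ring

lemma sqrt_mul_mul_sqrt_div {α y : ℝ} (hα : 0 < α) (hy : 0 < y) : √(y * α) * √(α / y) = α := by
  rw [← sqrt_mul (by positivity), show y * α * (α / y) = α ^ 2 by field_simp, sqrt_sq hα.le]

lemma rectTheta_one_div {α y : ℝ} (hα : 0 < α) (hy : 0 < y) :
    rectTheta 0 (1 / α) y = α * rectTheta 0 α y := by
  simp only [rectTheta, thetaMoment_zero_zero]
  rw [show y * (1 / α) = 1 / (α / y) by field_simp, show 1 / α / y = 1 / (y * α) by field_simp,
    theta3_one_div (by positivity), theta3_one_div (by positivity)]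
  linear_combination theta3 (α / y) * theta3 (y * α) * sqrt_mul_mul_sqrt_div hα hy

/-- The dual of a rhombic lattice is the same lattice, rotated and rescaled. -/
lemma rhombTheta_four_div {α y : ℝ} (hα : 0 < α) (hy : 0 < y) :
    rhombTheta (4 / α) y = α / 2 * rhombTheta α y := by
  have hA : 0 < y * α := by positivity
  have hB : 0 < α / y := by positivity
  simp only [rhombTheta, rectTheta, thetaMoment_zero_zero, thetaMoment_half_zero]
  rw [show y * (4 / α) = 4 / (α / y) by field_simp, show 4 / α / y = 4 / (y * α) by field_simp,
    theta3_four_div hA, theta3_four_div hB, theta2_four_div hA, theta2_four_div hB]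
  linear_combination (theta3 (y * α) * theta3 (α / y) + theta2 (y * α) * theta2 (α / y)) / 2
    * sqrt_mul_mul_sqrt_div hα hy

/-! ### Variations in the aspect ratio -/

/-- The first variation `y² ∂/∂y` of `rectTheta s α`. With this weight, the derivative
has no first-order terms on the row `k = 0` of the double sum over `(k, l) ∈ ℤ²`. -/
noncomputable def rectVariation (s α y : ℝ) : ℝ :=
  α * (thetaMoment s 0 (y * α) * thetaMoment s 1 (α / y)
    - y ^ 2 * (thetaMoment s 1 (y * α) * thetaMoment s 0 (α / y)))

lemma hasDerivAt_thetaMoment_mul_const (s : ℝ) (j : ℕ) {α y : ℝ} (hα : 0 < α) (hy : 0 < y) :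
    HasDerivAt (fun z => thetaMoment s j (z * α)) (-thetaMoment s (j + 1) (y * α) * α) y :=
  HasDerivAt.comp (h₂ := thetaMoment s j) y
    (hasDerivAt_thetaMoment s j (x := y * α) (by positivity)) (hasDerivAt_mul_const α)

lemma hasDerivAt_thetaMoment_const_div (s : ℝ) (j : ℕ) {α y : ℝ} (hα : 0 < α) (hy : 0 < y) :
    HasDerivAt (fun z => thetaMoment s j (α / z))
      (thetaMoment s (j + 1) (α / y) * (α / y ^ 2)) y := by
  refine ((hasDerivAt_thetaMoment s j (x := α / y) (by positivity)).comp y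
    ((hasDerivAt_inv hy.ne').const_mul α)).congr_deriv ?_
  ring

lemma hasDerivAt_rectTheta (s : ℝ) {α y : ℝ} (hα : 0 < α) (hy : 0 < y) :
    HasDerivAt (rectTheta s α) (rectVariation s α y / y ^ 2) y := by
  refine ((hasDerivAt_thetaMoment_mul_const s 0 hα hy).mul
    (hasDerivAt_thetaMoment_const_div s 0 hα hy)).congr_deriv ?_
  unfold rectVariation
  field_simp
  ring

/-- The sum of the squares `(x a_k - y b_l)²` with weights `e^{-x a_k - y b_l}`, where
`a_k = π(k+s)²` and `b_l = π(l+s)²`, in terms of moments. -/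
noncomputable def sqVariation (s x y : ℝ) : ℝ :=
  x ^ 2 * (thetaMoment s 2 x * thetaMoment s 0 y)
    - 2 * x * y * (thetaMoment s 1 x * thetaMoment s 1 y)
    + y ^ 2 * (thetaMoment s 0 x * thetaMoment s 2 y)

/-- The part of the derivative of `rectVariation` that is of first order in the exponents; it comes
from the derivative of the weight `y²`. -/
noncomputable def firstOrder (s α y : ℝ) : ℝ :=
  2 * (y * α) * (thetaMoment s 1 (y * α) * thetaMoment s 0 (α / y))

lemma firstOrder_nonneg (s : ℝ) {α y : ℝ} (hα : 0 ≤ α) (hy : 0 ≤ y) : 0 ≤ firstOrder s α y :=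
  mul_nonneg (by positivity) (mul_nonneg (thetaMoment_nonneg _ _ _) (thetaMoment_nonneg _ _ _))

lemma hasDerivAt_rectVariation (s : ℝ) {α y : ℝ} (hα : 0 < α) (hy : 0 < y) :
    HasDerivAt (rectVariation s α) (sqVariation s (y * α) (α / y) - firstOrder s α y) y := by
  have h1 := (hasDerivAt_thetaMoment_mul_const s 0 hα hy).mul
    (hasDerivAt_thetaMoment_const_div s 1 hα hy)
  have h2 := (hasDerivAt_thetaMoment_mul_const s 1 hα hy).mul
    (hasDerivAt_thetaMoment_const_div s 0 hα hy)
  refine ((h1.sub ((hasDerivAt_pow 2 y).mul h2)).const_mul α).congr_deriv ?_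
  simp only [sqVariation, firstOrder, Pi.mul_apply, zero_add, Nat.reduceAdd, Nat.cast_ofNat,
    Nat.add_one_sub_one, pow_one]
  field_simp
  ring

lemma hasSum_sqVariation (s : ℝ) {x y : ℝ} (hx : 0 < x) (hy : 0 < y) :
    HasSum (fun p : ℤ × ℤ => (x * (π * (p.1 + s) ^ 2) - y * (π * (p.2 + s) ^ 2)) ^ 2
      * (thetaTerm 0 x (p.1 + s) * thetaTerm 0 y (p.2 + s))) (sqVariation s x y) := by
  refine ((((hasSum_thetaMoment_mul s 2 0 hx hy).mul_left (x ^ 2)).sub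
    ((hasSum_thetaMoment_mul s 1 1 hx hy).mul_left (2 * x * y))).add
    ((hasSum_thetaMoment_mul s 0 2 hx hy).mul_left (y ^ 2))).congr_fun fun p => ?_
  simp only [thetaTerm_succ]
  ring

lemma sqVariation_nonneg (s : ℝ) {x y : ℝ} (hx : 0 < x) (hy : 0 < y) : 0 ≤ sqVariation s x y :=
  (hasSum_sqVariation s hx hy).nonneg fun _ =>
    mul_nonneg (sq_nonneg _) (mul_nonneg (thetaTerm_nonneg _ _ _) (thetaTerm_nonneg _ _ _))

/-- The row `k = 0` of the double sum `sqVariation 0 x y`, which does not depend on `x`. -/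
noncomputable def rowZero (y : ℝ) : ℝ :=
  y ^ 2 * thetaMoment 0 2 y

lemma rowZero_le_sqVariation {x y : ℝ} (hx : 0 < x) (hy : 0 < y) :
    rowZero y ≤ sqVariation 0 x y := by
  refine hasSum_le_inj (fun l : ℤ => ((0 : ℤ), l)) (Prod.mk_right_injective 0)
    (fun _ _ => mul_nonneg (sq_nonneg _) (mul_nonneg (thetaTerm_nonneg _ _ _)
      (thetaTerm_nonneg _ _ _))) (fun l => le_of_eq ?_)
    ((hasSum_thetaMoment 0 2 hy).mul_left (y ^ 2)) (hasSum_sqVariation 0 hx hy)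
  simp only [thetaTerm_succ, Int.cast_zero, add_zero, thetaTerm_zero_right]
  ring

/-! ### Critical aspect ratios -/

lemma rectVariation_one (s α : ℝ) : rectVariation s α 1 = 0 := by
  simp only [rectVariation, one_mul, div_one]
  ring

/-- In the coordinates `(k, l) = (2p, q - p)`, respectively `(2p + 1, q - p)`, the form
`k² + kl + l²` becomes `3p² + q²`, respectively `3(p + 1/2)² + (q + 1/2)²`. -/
lemma bijective_sumElim_hexagonal : Function.Bijective
    (Sum.elim (fun p : ℤ × ℤ => (2 * p.1, p.2 - p.1))
      fun p : ℤ × ℤ => (2 * p.1 + 1, p.2 - p.1)) := by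
  constructor
  · rintro (⟨m, n⟩ | ⟨m, n⟩) (⟨m', n'⟩ | ⟨m', n'⟩) h <;>
      simp only [Sum.elim_inl, Sum.elim_inr, Prod.mk.injEq] at h <;> grind
  · rintro ⟨k, l⟩
    obtain ⟨p, rfl | rfl⟩ := Int.even_or_odd' k
    exacts [⟨.inl (p, l + p), by simp⟩, ⟨.inr (p, l + p), by simp⟩]

/-- The order-three rotation `(k, l) ↦ (l, -k - l)` of the hexagonal lattice. -/
def hexRotation : ℤ × ℤ ≃ ℤ × ℤ where
  toFun p := (p.2, -p.1 - p.2)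
  invFun p := (-p.1 - p.2, p.1)
  left_inv p := Prod.ext (by simp only; ring) rfl
  right_inv p := Prod.ext rfl (by simp only; ring)

lemma hasSum_eq_zero_of_orbit_sum_eq_zero {ι : Type*} {f : ι → ℝ} {a : ℝ} (e : ι ≃ ι)
    (hf : HasSum f a) (h : ∀ i, f i + f (e i) + f (e (e i)) = 0) : a = 0 := by
  have he : HasSum (f ∘ e) a := e.hasSum_iff.2 hf
  have hee : HasSum (f ∘ e ∘ e) a := e.hasSum_iff.2 he
  have h3 : a + a + a = 0 := ((hf.add he).add hee).unique (hasSum_zero.congr_fun h)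
  linarith

/-- The summands of the first variation at the hexagonal lattice: a quadratic form of trace zero
against a radial Gaussian, in coordinates with respect to two vectors at an angle of `60°`. -/
noncomputable def hexVariationTerm (x : ℝ) (p : ℤ × ℤ) : ℝ :=
  π * ((p.2 : ℝ) ^ 2 + p.1 * p.2 - (p.1 : ℝ) ^ 2 / 2)
    * exp (-π * ((p.1 : ℝ) ^ 2 + p.1 * p.2 + (p.2 : ℝ) ^ 2) * x)

lemma hexVariationTerm_orbit_sum (x : ℝ) (p : ℤ × ℤ) :
    hexVariationTerm x p + hexVariationTerm x (hexRotation p)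
      + hexVariationTerm x (hexRotation (hexRotation p)) = 0 := by
  obtain ⟨k, l⟩ := p
  have h1 : (l : ℝ) ^ 2 + l * (-k - l) + (-k - l) ^ 2 = (k : ℝ) ^ 2 + k * l + l ^ 2 := by ring
  have h2 : (-k - l : ℝ) ^ 2 + (-k - l) * (-l - (-k - l)) + (-l - (-k - l)) ^ 2
      = (k : ℝ) ^ 2 + k * l + l ^ 2 := by ring
  simp only [hexVariationTerm, hexRotation, Equiv.coe_fn_mk, Int.cast_sub, Int.cast_neg, h1, h2]
  ring

lemma hexVariationTerm_eq (x : ℝ) {k l : ℤ} {u v : ℝ} (hk : (k : ℝ) = 2 * u)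
    (hl : (l : ℝ) = v - u) :
    hexVariationTerm x (k, l) = thetaTerm 0 (3 * x) u * thetaTerm 1 x v
      - 3 * (thetaTerm 1 (3 * x) u * thetaTerm 0 x v) := by
  have hexp : exp (-π * ((k : ℝ) ^ 2 + k * l + (l : ℝ) ^ 2) * x)
      = exp (-π * u ^ 2 * (3 * x)) * exp (-π * v ^ 2 * x) := by
    rw [← exp_add, hk, hl]
    ring_nf
  simp only [hexVariationTerm, thetaTerm]
  rw [hexp, hk, hl]
  ring

lemma hasSum_hexVariationTerm {x : ℝ} (hx : 0 < x) :
    HasSum (hexVariationTerm x)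
      (thetaMoment 0 0 (3 * x) * thetaMoment 0 1 x
          - 3 * (thetaMoment 0 1 (3 * x) * thetaMoment 0 0 x)
        + (thetaMoment (1 / 2) 0 (3 * x) * thetaMoment (1 / 2) 1 x
          - 3 * (thetaMoment (1 / 2) 1 (3 * x) * thetaMoment (1 / 2) 0 x))) := by
  have hx3 : 0 < 3 * x := by positivity
  have hsum (s : ℝ) := (hasSum_thetaMoment_mul s 0 1 hx3 hx).sub
    ((hasSum_thetaMoment_mul s 1 0 hx3 hx).mul_left 3)
  exact hasSum_of_bijective_sumElim bijective_sumElim_hexagonal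
    ((hsum 0).congr_fun fun p => hexVariationTerm_eq x (by push_cast; ring) (by push_cast; ring))
    ((hsum (1 / 2)).congr_fun fun p =>
      hexVariationTerm_eq x (by push_cast; ring) (by push_cast; ring))

lemma rectVariation_sqrt_three {α : ℝ} (hα : 0 < α) :
    rectVariation 0 α √3 + rectVariation (1 / 2) α √3 = 0 := by
  have h3 : √3 ^ 2 = (3 : ℝ) := sq_sqrt zero_le_three
  have hcrit := hasSum_eq_zero_of_orbit_sum_eq_zero hexRotation
    (hasSum_hexVariationTerm (x := α / √3) (by positivity)) (hexVariationTerm_orbit_sum _)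
  rw [show 3 * (α / √3) = √3 * α by field_simp; linarith] at hcrit
  simp only [rectVariation, h3]
  linear_combination α * hcrit

/-! ### Bounds for the moments -/

/-- The half `n ≥ 0` of the series `thetaMoment s j`. -/
noncomputable def thetaTail (s : ℝ) (j : ℕ) (x : ℝ) : ℝ :=
  ∑' n : ℕ, thetaTerm j x (n + s)

lemma hasSum_thetaTail (s : ℝ) (j : ℕ) {x : ℝ} (hx : 0 < x) :
    HasSum (fun n : ℕ => thetaTerm j x (n + s)) (thetaTail s j x) :=
  ((summable_thetaTerm s j hx).comp_injective Nat.cast_injective).hasSum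

lemma thetaMoment_zero_eq (j : ℕ) {x : ℝ} (hx : 0 < x) :
    thetaMoment 0 j x = 0 ^ j + 2 * thetaTail 1 j x := by
  have h := hasSum_thetaTail 1 j hx
  have hsum : HasSum (fun n : ℤ => thetaTerm j x (n + 0))
      (thetaTail 1 j x + thetaTerm j x ((0 : ℤ) + 0) + thetaTail 1 j x) := by
    refine HasSum.of_add_one_of_neg_add_one (h.congr_fun fun n => ?_) (h.congr_fun fun n => ?_)
    · push_cast
      rw [add_zero]
    · push_cast
      rw [add_zero, thetaTerm_neg]
  rw [thetaMoment, hsum.tsum_eq, Int.cast_zero, add_zero, thetaTerm_zero_right]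
  ring

lemma thetaMoment_half_eq (j : ℕ) {x : ℝ} (hx : 0 < x) :
    thetaMoment (1 / 2) j x = 2 * thetaTail (1 / 2) j x := by
  have h := hasSum_thetaTail (1 / 2) j hx
  have hsum : HasSum (fun n : ℤ => thetaTerm j x (n + 1 / 2))
      (thetaTail (1 / 2) j x + thetaTail (1 / 2) j x) := by
    refine HasSum.of_nat_of_neg_add_one (h.congr_fun fun n => ?_) (h.congr_fun fun n => ?_)
    · push_cast
      rfl
    · rw [← thetaTerm_neg]
      congr 1
      push_cast
      ring
  rw [thetaMoment, hsum.tsum_eq, two_mul]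

lemma thetaTerm_natCast_add_le {s : ℝ} (hs : 0 < s) (j n : ℕ) {x r : ℝ} (hx : 0 ≤ x)
    (hr : r ≤ (2 * s + 1) * π * x - 2 * j / s) :
    thetaTerm j x (n + s) ≤ (π * s ^ 2) ^ j * exp (-π * s ^ 2 * x) * exp (-r) ^ n := by
  have hpow : (π * (n + s) ^ 2) ^ j ≤ (π * s ^ 2) ^ j * exp (n * (2 * j / s)) := by
    have hlin : n + s ≤ s * exp (n / s) := by
      calc n + s = s * (n / s + 1) := by field_simp
        _ ≤ s * exp (n / s) := by gcongr; exact add_one_le_exp _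
    calc (π * (n + s) ^ 2) ^ j ≤ (π * (s * exp (n / s)) ^ 2) ^ j := by gcongr
      _ = (π * s ^ 2) ^ j * exp (n * (2 * j / s)) := by
        rw [mul_pow s, ← mul_assoc, mul_pow _ _ j, ← exp_nat_mul, ← exp_nat_mul]
        congr 2
        push_cast
        ring
  have hgauss : -π * (n + s) ^ 2 * x ≤ -π * s ^ 2 * x - n * ((2 * s + 1) * π * x) := by
    have hn : (n : ℝ) ≤ (n : ℝ) ^ 2 := by exact_mod_cast Nat.le_self_pow two_ne_zero n
    have hπx : 0 ≤ π * x := by positivity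
    nlinarith
  calc thetaTerm j x (n + s)
      ≤ (π * s ^ 2) ^ j * exp (n * (2 * j / s))
        * exp (-π * s ^ 2 * x - n * ((2 * s + 1) * π * x)) :=
        mul_le_mul hpow (exp_le_exp.2 hgauss) (exp_nonneg _) (by positivity)
    _ = (π * s ^ 2) ^ j * exp (-π * s ^ 2 * x + n * (2 * j / s - (2 * s + 1) * π * x)) := by
        rw [mul_assoc, ← exp_add]
        ring_nf
    _ ≤ (π * s ^ 2) ^ j * exp (-π * s ^ 2 * x + n * -r) := by gcongr; linarith
    _ = (π * s ^ 2) ^ j * exp (-π * s ^ 2 * x) * exp (-r) ^ n := by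
        rw [exp_add, exp_nat_mul]
        ring

lemma inv_one_sub_exp_neg_le {r : ℝ} (hr : 0 < r) :
    (1 - exp (-r))⁻¹ ≤ 1 + (r + r ^ 2 / 2)⁻¹ := by
  have hq := quadratic_le_exp_of_nonneg hr.le
  have hpos : 0 < r + r ^ 2 / 2 := by positivity
  calc (1 - exp (-r))⁻¹ = 1 + (exp r - 1)⁻¹ := by
        have : exp r - 1 ≠ 0 := by linarith
        rw [exp_neg]
        field_simp
        ring
    _ ≤ 1 + (r + r ^ 2 / 2)⁻¹ := by gcongr; linarith

lemma thetaTail_le {s : ℝ} (hs : 0 < s) (j : ℕ) {x r : ℝ} (hx : 0 < x) (hr : 0 < r)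
    (hrx : r ≤ (2 * s + 1) * π * x - 2 * j / s) :
    thetaTail s j x ≤ (π * s ^ 2) ^ j * exp (-π * s ^ 2 * x) * (1 + (r + r ^ 2 / 2)⁻¹) := by
  have hgeom := (hasSum_geometric_of_lt_one (exp_nonneg (-r))
    (by simpa using hr)).mul_left ((π * s ^ 2) ^ j * exp (-π * s ^ 2 * x))
  calc thetaTail s j x
      ≤ (π * s ^ 2) ^ j * exp (-π * s ^ 2 * x) * (1 - exp (-r))⁻¹ :=
        hasSum_le (fun n => thetaTerm_natCast_add_le hs j n hx.le hrx)
          (hasSum_thetaTail s j hx) hgeom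
    _ ≤ _ := by gcongr; exact inv_one_sub_exp_neg_le hr

lemma thetaMoment_zero_zero_le {x : ℝ} (hx : 0 < x) : thetaMoment 0 0 x ≤ 1 + 1 / (π * x) := by
  set p := π * x with hp
  have hp0 : 0 < p := by positivity
  have htail := thetaTail_le one_pos 0 hx (r := 3 * p) (by positivity) (by simp [hp]; linarith)
  have hexp : exp (-p) ≤ (1 + p + p ^ 2 / 2)⁻¹ := by
    rw [exp_neg]
    exact inv_anti₀ (by positivity) (quadratic_le_exp_of_nonneg hp0.le)
  have hrat : 2 * ((1 + p + p ^ 2 / 2)⁻¹ * (1 + (3 * p + (3 * p) ^ 2 / 2)⁻¹)) ≤ 1 / p := by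
    have hcubic : 0 ≤ 1 + p * ((3 * p - 2) ^ 2 / 4 + 1 / 2) := by positivity
    field_simp
    nlinarith
  calc thetaMoment 0 0 x = 1 + 2 * thetaTail 1 0 x := by rw [thetaMoment_zero_eq 0 hx, pow_zero]
    _ ≤ 1 + 2 * (exp (-p) * (1 + (3 * p + (3 * p) ^ 2 / 2)⁻¹)) := by
        gcongr
        simpa [hp] using htail
    _ ≤ 1 + 2 * ((1 + p + p ^ 2 / 2)⁻¹ * (1 + (3 * p + (3 * p) ^ 2 / 2)⁻¹)) := by gcongr
    _ ≤ 1 + 1 / p := by gcongr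

lemma thetaMoment_zero_one_le {x : ℝ} (hx : 1 ≤ x) :
    thetaMoment 0 1 x ≤ 9 / 4 * π * exp (-π * x) := by
  have hx0 : 0 < x := by positivity
  have hr : 7 ≤ (2 * 1 + 1) * π * x - 2 * (1 : ℕ) / 1 := by
    norm_num
    nlinarith [pi_gt_three]
  have htail := thetaTail_le one_pos 1 hx0 (by norm_num) hr
  have hexp : 0 < π * exp (-π * x) := by positivity
  rw [thetaMoment_zero_eq 1 hx0]
  simp only [one_pow, mul_one, pow_one] at htail ⊢
  linarith

lemma thetaMoment_half_one_le {x : ℝ} (hx : 17 / 5 ≤ x) :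
    thetaMoment (1 / 2) 1 x ≤ 51 / 100 * π * exp (-π / 4 * x) := by
  have hx0 : 0 < x := by positivity
  have hr : 17 ≤ (2 * (1 / 2) + 1) * π * x - 2 * (1 : ℕ) / (1 / 2) := by
    norm_num
    nlinarith [pi_gt_d2]
  have htail := thetaTail_le one_half_pos 1 hx0 (by norm_num) hr
  have hexp : 0 < π * exp (-π / 4 * x) := by positivity
  rw [thetaMoment_half_eq 1 hx0]
  rw [show -π * (1 / 2) ^ 2 * x = -π / 4 * x by ring, pow_one] at htail
  linarith

lemma thetaMoment_half_zero_le {x : ℝ} (hx : 0 < x) :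
    thetaMoment (1 / 2) 0 x ≤ 2 * exp (-π / 4 * x) * (1 + 1 / (2 * π * x)) := by
  have hr : 2 * π * x ≤ (2 * (1 / 2) + 1) * π * x - 2 * (0 : ℕ) / (1 / 2) := by
    norm_num
  calc thetaMoment (1 / 2) 0 x = 2 * thetaTail (1 / 2) 0 x := thetaMoment_half_eq 0 hx
    _ ≤ 2 * (exp (-π / 4 * x) * (1 + (2 * π * x + (2 * π * x) ^ 2 / 2)⁻¹)) := by
        gcongr
        have htail := thetaTail_le one_half_pos 0 hx (by positivity) hr
        rwa [show -π * (1 / 2) ^ 2 * x = -π / 4 * x by ring, pow_zero, one_mul] at htail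
    _ ≤ 2 * exp (-π / 4 * x) * (1 + 1 / (2 * π * x)) := by
        rw [← mul_assoc, one_div]
        gcongr
        exact le_add_of_nonneg_right (by positivity)

lemma le_rowZero {x : ℝ} (hx : 0 < x) : 2 * (π * x) ^ 2 * exp (-π * x) ≤ rowZero x := by
  have hfirst : thetaTerm 2 x ((0 : ℕ) + 1) ≤ thetaTail 1 2 x :=
    le_hasSum (hasSum_thetaTail 1 2 hx) 0 fun _ _ => thetaTerm_nonneg _ _ _
  simp only [thetaTerm, Nat.cast_zero, zero_add, one_pow, mul_one] at hfirst
  calc 2 * (π * x) ^ 2 * exp (-π * x) = x ^ 2 * (2 * (π ^ 2 * exp (-π * x))) := by ring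
    _ ≤ x ^ 2 * (0 ^ 2 + 2 * thetaTail 1 2 x) := by
        gcongr
        linarith
    _ = rowZero x := by rw [rowZero, thetaMoment_zero_eq 2 hx]

/-! ### The row `k = 0` outweighs the first-order terms -/

lemma pow_le_exp_mul_sub_inv {u c : ℝ} {n : ℕ} (hu : 1 ≤ u) (hn : n ≤ 2 * c) :
    u ^ n ≤ exp (c * (u - u⁻¹)) := by
  have hu0 : 0 < u := by positivity
  have hlog : 0 ≤ log u := log_nonneg hu
  have hsinh : log u ≤ (u - u⁻¹) / 2 := (self_le_sinh_iff.2 hlog).trans_eq (sinh_log hu0)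
  have hc : 0 ≤ c := by linarith [n.cast_nonneg (α := ℝ)]
  calc u ^ n = exp (n * log u) := by rw [exp_nat_mul, exp_log hu0]
    _ ≤ exp (2 * c * ((u - u⁻¹) / 2)) := by gcongr
    _ = exp (c * (u - u⁻¹)) := by ring_nf

lemma pow_mul_exp_neg_le {α y : ℝ} {k : ℕ} (hk : k ≤ α) (hy : 1 ≤ y) :
    y ^ (6 * k) * exp (-π * (y * α)) ≤ exp (-π * (α / y)) := by
  have hπ := pi_gt_three
  have hpow : y ^ (6 * k) ≤ exp (π * α * (y - y⁻¹)) := by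
    refine pow_le_exp_mul_sub_inv hy ?_
    push_cast
    nlinarith [k.cast_nonneg (α := ℝ)]
  calc y ^ (6 * k) * exp (-π * (y * α))
      ≤ exp (π * α * (y - y⁻¹)) * exp (-π * (y * α)) := by gcongr
    _ = exp (-π * (α / y)) := by
        rw [← exp_add]
        ring_nf

lemma pow_four_mul_exp_neg_le {α y : ℝ} (hα : 2 ≤ α) (hy : √3 ≤ y) :
    y ^ 4 * (exp (-π / 4 * (y * α)) * exp (-π / 4 * (α / y))) ≤ 9 * exp (-π * (α / y)) := by
  have h3 : 0 < √3 := by positivity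
  have hy0 : 0 < y := h3.trans_le hy
  have hsq : √3 ^ 2 = 3 := sq_sqrt zero_le_three
  have hpow : (y / √3) ^ 4 ≤ exp (√3 * π * α / 4 * (y / √3 - (y / √3)⁻¹)) := by
    refine pow_le_exp_mul_sub_inv ((one_le_div h3).2 hy) ?_
    have hsqrt : 3 / 2 ≤ √3 := le_sqrt_of_sq_le (by norm_num)
    have hsqrtπ : 3 / 2 * 3 ≤ √3 * π := by gcongr; exact pi_gt_three.le
    push_cast
    nlinarith
  have hpow4 : (y / √3) ^ 4 = y ^ 4 / 9 := by
    rw [div_pow, show √3 ^ 4 = (√3 ^ 2) ^ 2 by ring, hsq]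
    norm_num
  have harg : √3 * π * α / 4 * (y / √3 - (y / √3)⁻¹) = π / 4 * (y * α) - 3 * π / 4 * (α / y) := by
    field_simp
    rw [hsq]
  rw [hpow4, harg, div_le_iff₀ (by norm_num)] at hpow
  calc y ^ 4 * (exp (-π / 4 * (y * α)) * exp (-π / 4 * (α / y)))
      ≤ exp (π / 4 * (y * α) - 3 * π / 4 * (α / y)) * 9
        * (exp (-π / 4 * (y * α)) * exp (-π / 4 * (α / y))) := by gcongr
    _ = 9 * exp (-π * (α / y)) := by
        rw [mul_comm _ (9 : ℝ), mul_assoc, ← exp_add, ← exp_add]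
        ring_nf

lemma firstOrder_zero_lt {α y : ℝ} (hα : 1 ≤ α) (hy : 1 ≤ y) :
    firstOrder 0 α y < 2 * (π * (y * α)) ^ 2 * exp (-π * (y * α)) := by
  have hA : 1 ≤ y * α := one_le_mul_of_one_le_of_one_le hy hα
  have hB : 0 < α / y := by positivity
  have hinv : 1 / (π * (α / y)) ≤ y * α / 3 := by
    rw [div_le_div_iff₀ (by positivity) three_pos]
    field_simp
    nlinarith [pi_gt_three]
  have hlin : 9 / 4 * (1 + y * α / 3) < π * (y * α) := by nlinarith [pi_gt_three]
  calc firstOrder 0 α y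
      ≤ 2 * (y * α) * (9 / 4 * π * exp (-π * (y * α)) * (1 + 1 / (π * (α / y)))) := by
        unfold firstOrder
        gcongr
        exacts [thetaMoment_nonneg _ _ _, thetaMoment_zero_one_le hA, thetaMoment_zero_zero_le hB]
    _ ≤ 2 * (y * α) * (9 / 4 * π * exp (-π * (y * α)) * (1 + y * α / 3)) := by gcongr
    _ = 2 * π * (y * α) * exp (-π * (y * α)) * (9 / 4 * (1 + y * α / 3)) := by ring
    _ < 2 * π * (y * α) * exp (-π * (y * α)) * (π * (y * α)) := by gcongr
    _ = 2 * (π * (y * α)) ^ 2 * exp (-π * (y * α)) := by ring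

lemma pow_mul_firstOrder_lt_pow_mul_rowZero {α y : ℝ} {k : ℕ} (hα : 1 ≤ α) (hk : k ≤ α)
    (hy : 1 ≤ y) : y ^ (6 * k) * firstOrder 0 α y < y ^ 4 * rowZero (α / y) := by
  calc y ^ (6 * k) * firstOrder 0 α y
      < y ^ (6 * k) * (2 * (π * (y * α)) ^ 2 * exp (-π * (y * α))) := by
        gcongr
        exact firstOrder_zero_lt hα hy
    _ = 2 * (π * (y * α)) ^ 2 * (y ^ (6 * k) * exp (-π * (y * α))) := by ring
    _ ≤ 2 * (π * (y * α)) ^ 2 * exp (-π * (α / y)) := by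
        gcongr
        exact pow_mul_exp_neg_le hk hy
    _ = y ^ 4 * (2 * (π * (α / y)) ^ 2 * exp (-π * (α / y))) := by field_simp
    _ ≤ y ^ 4 * rowZero (α / y) := by
        gcongr
        exact le_rowZero (by positivity)

lemma firstOrder_lt_rowZero {α y : ℝ} (hα : 1 ≤ α) (hy : 1 ≤ y) :
    firstOrder 0 α y < rowZero (α / y) := by
  have hlt := pow_mul_firstOrder_lt_pow_mul_rowZero (k := 1) hα (by simpa using hα) hy
  have hpow : y ^ 4 ≤ y ^ (6 * 1) := pow_le_pow_right₀ hy (by norm_num)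
  have hnonneg := firstOrder_nonneg 0 (by positivity : 0 ≤ α) (by positivity : 0 ≤ y)
  exact lt_of_mul_lt_mul_left ((mul_le_mul_of_nonneg_right hpow hnonneg).trans_lt hlt)
    (by positivity)

lemma eighty_one_mul_firstOrder_lt_rowZero {α y : ℝ} (hα : 2 ≤ α) (hy : √3 ≤ y) :
    81 * firstOrder 0 α y < rowZero (α / y) := by
  have hα0 : 0 < α := by positivity
  have hy1 : 1 ≤ y := (one_le_sqrt.2 (by norm_num)).trans hy
  have hlt := pow_mul_firstOrder_lt_pow_mul_rowZero (k := 2) (one_le_two.trans hα)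
    (by exact_mod_cast hα) hy1
  have hpow : y ^ 4 * 81 ≤ y ^ (6 * 2) := by
    calc y ^ 4 * 81 = y ^ 4 * (√3 ^ 2) ^ 4 := by rw [sq_sqrt zero_le_three]; norm_num
      _ ≤ y ^ 4 * (y ^ 2) ^ 4 := by gcongr
      _ = y ^ (6 * 2) := by ring
  have hnonneg := firstOrder_nonneg 0 hα0.le (zero_le_one.trans hy1)
  refine lt_of_mul_lt_mul_left ?_ (by positivity : 0 ≤ y ^ 4)
  rw [← mul_assoc]
  exact (mul_le_mul_of_nonneg_right hpow hnonneg).trans_lt hlt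

lemma firstOrder_half_le {α y : ℝ} (hα : 2 ≤ α) (hy : √3 ≤ y) :
    firstOrder (1 / 2) α y
      ≤ 49 / 450 * (2 * (π * (y * α)) ^ 2)
        * (exp (-π / 4 * (y * α)) * exp (-π / 4 * (α / y))) := by
  have hy0 : 0 < y := (by positivity : 0 < √3).trans_le hy
  have hsqrt : 173 / 100 ≤ √3 := le_sqrt_of_sq_le (by norm_num)
  have hA : 173 / 50 ≤ y * α := by nlinarith
  have hB : 0 < α / y := by positivity
  have hinv : 1 / (2 * π * (α / y)) ≤ y * α / 24 := by
    rw [div_le_div_iff₀ (by positivity) (by norm_num)]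
    field_simp
    nlinarith [pi_gt_three]
  have hlin : 51 / 50 * (1 + y * α / 24) ≤ 49 / 450 * (π * (y * α)) := by nlinarith [pi_gt_d2]
  set e := exp (-π / 4 * (y * α))
  set e' := exp (-π / 4 * (α / y))
  calc firstOrder (1 / 2) α y
      ≤ 2 * (y * α) * (51 / 100 * π * e * (2 * e' * (1 + 1 / (2 * π * (α / y))))) := by
        unfold firstOrder
        gcongr
        exacts [thetaMoment_nonneg _ _ _, thetaMoment_half_one_le (by linarith),
          thetaMoment_half_zero_le hB]
    _ ≤ 2 * (y * α) * (51 / 100 * π * e * (2 * e' * (1 + y * α / 24))) := by gcongr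
    _ = 2 * π * (y * α) * (e * e') * (51 / 50 * (1 + y * α / 24)) := by ring
    _ ≤ 2 * π * (y * α) * (e * e') * (49 / 450 * (π * (y * α))) := by gcongr
    _ = 49 / 450 * (2 * (π * (y * α)) ^ 2) * (e * e') := by ring

lemma firstOrder_half_le_rowZero {α y : ℝ} (hα : 2 ≤ α) (hy : √3 ≤ y) :
    firstOrder (1 / 2) α y ≤ 49 / 50 * rowZero (α / y) := by
  have hy0 : 0 < y := (by positivity : 0 < √3).trans_le hy
  refine le_of_mul_le_mul_left ?_ (by positivity : 0 < y ^ 4)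
  calc y ^ 4 * firstOrder (1 / 2) α y
      ≤ y ^ 4 * (49 / 450 * (2 * (π * (y * α)) ^ 2)
        * (exp (-π / 4 * (y * α)) * exp (-π / 4 * (α / y)))) := by
        gcongr
        exact firstOrder_half_le hα hy
    _ = 49 / 450 * (2 * (π * (y * α)) ^ 2)
        * (y ^ 4 * (exp (-π / 4 * (y * α)) * exp (-π / 4 * (α / y)))) := by ring
    _ ≤ 49 / 450 * (2 * (π * (y * α)) ^ 2) * (9 * exp (-π * (α / y))) := by
        gcongr ?_ * ?_
        exact pow_four_mul_exp_neg_le hα hy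
    _ = y ^ 4 * (49 / 50 * (2 * (π * (α / y)) ^ 2 * exp (-π * (α / y)))) := by
        field_simp
        norm_num
    _ ≤ y ^ 4 * (49 / 50 * rowZero (α / y)) := by
        gcongr
        exact le_rowZero (by positivity)

/-! ### Monotonicity -/

lemma strictMonoOn_Ici_of_hasDerivAt_div {f V V' w : ℝ → ℝ} {c : ℝ} (hw : ∀ y ∈ Ici c, 0 < w y)
    (hf : ∀ y ∈ Ici c, HasDerivAt f (V y / w y) y) (hV : ∀ y ∈ Ici c, HasDerivAt V (V' y) y)
    (hV' : ∀ y ∈ Ici c, 0 < V' y) (hc : V c = 0) : StrictMonoOn f (Ici c) := by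
  have hVmono : StrictMonoOn V (Ici c) :=
    strictMonoOn_of_hasDerivWithinAt_pos (convex_Ici c)
      (fun y hy => (hV y hy).continuousAt.continuousWithinAt)
      (fun y hy => (hV y (interior_subset hy)).hasDerivWithinAt)
      fun y hy => hV' y (interior_subset hy)
  refine strictMonoOn_of_hasDerivWithinAt_pos (convex_Ici c)
    (fun y hy => (hf y hy).continuousAt.continuousWithinAt)
    (fun y hy => (hf y (interior_subset hy)).hasDerivWithinAt) fun y hy => ?_
  have hcy : c < y := by rwa [interior_Ici] at hy
  exact div_pos (hc ▸ hVmono self_mem_Ici hcy.le hcy) (hw y hcy.le)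

lemma strictMonoOn_rectTheta_of_one_le {α : ℝ} (hα : 1 ≤ α) :
    StrictMonoOn (rectTheta 0 α) (Ici 1) := by
  have hα0 : 0 < α := by positivity
  have hpos {y : ℝ} (hy : y ∈ Ici 1) : 0 < y := one_pos.trans_le hy
  refine strictMonoOn_Ici_of_hasDerivAt_div (fun y hy => pow_pos (hpos hy) 2)
    (fun y hy => hasDerivAt_rectTheta 0 hα0 (hpos hy))
    (fun y hy => hasDerivAt_rectVariation 0 hα0 (hpos hy)) (fun y hy => ?_) (rectVariation_one 0 α)
  have hy0 := hpos hy
  have hsq := rowZero_le_sqVariation (x := y * α) (y := α / y) (by positivity) (by positivity)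
  linarith [firstOrder_lt_rowZero hα hy]

lemma strictMonoOn_rectTheta {α : ℝ} (hα : 0 < α) : StrictMonoOn (rectTheta 0 α) (Ici 1) := by
  obtain h | h := le_total 1 α
  · exact strictMonoOn_rectTheta_of_one_le h
  have hmono := strictMonoOn_rectTheta_of_one_le (one_le_one_div hα h)
  intro y hy z hz hyz
  have hlt := hmono hy hz hyz
  rw [rectTheta_one_div hα (one_pos.trans_le hy),
    rectTheta_one_div hα (one_pos.trans_le hz)] at hlt
  exact lt_of_mul_lt_mul_left hlt hα.le

lemma strictMonoOn_rhombTheta_of_two_le {α : ℝ} (hα : 2 ≤ α) :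
    StrictMonoOn (rhombTheta α) (Ici √3) := by
  have hα0 : 0 < α := by positivity
  have hpos {y : ℝ} (hy : y ∈ Ici √3) : 0 < y := (by positivity : 0 < √3).trans_le hy
  refine strictMonoOn_Ici_of_hasDerivAt_div
    (V := fun y => rectVariation 0 α y + rectVariation (1 / 2) α y)
    (fun y hy => pow_pos (hpos hy) 2)
    (fun y hy => ((hasDerivAt_rectTheta 0 hα0 (hpos hy)).add
      (hasDerivAt_rectTheta (1 / 2) hα0 (hpos hy))).congr_deriv (add_div _ _ _).symm)
    (fun y hy => (hasDerivAt_rectVariation 0 hα0 (hpos hy)).add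
      (hasDerivAt_rectVariation (1 / 2) hα0 (hpos hy))) (fun y hy => ?_)
    (rectVariation_sqrt_three hα0)
  have hy0 := hpos hy
  have hA : 0 < y * α := by positivity
  have hB : 0 < α / y := by positivity
  have hsq := rowZero_le_sqVariation hA hB
  have hsq' := sqVariation_nonneg (1 / 2) hA hB
  have hfirst := eighty_one_mul_firstOrder_lt_rowZero hα hy
  have hfirst' := firstOrder_half_le_rowZero hα hy
  have hrow : 0 < rowZero (α / y) := lt_of_lt_of_le (by positivity) (le_rowZero hB)
  -- `1 / 81 + 49 / 50 < 1`
  linarith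

lemma strictMonoOn_rhombTheta {α : ℝ} (hα : 0 < α) : StrictMonoOn (rhombTheta α) (Ici √3) := by
  obtain h | h := le_total 2 α
  · exact strictMonoOn_rhombTheta_of_two_le h
  have hdual : 2 ≤ 4 / α := by
    rw [le_div_iff₀ hα]
    linarith
  have hpos {y : ℝ} (hy : y ∈ Ici √3) : 0 < y := (by positivity : 0 < √3).trans_le hy
  intro y hy z hz hyz
  have hlt := strictMonoOn_rhombTheta_of_two_le hdual hy hz hyz
  rw [rhombTheta_four_div hα (hpos hy), rhombTheta_four_div hα (hpos hz)] at hlt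
  exact lt_of_mul_lt_mul_left hlt (by positivity)

lemma strictMonoOn_Et {t α : ℝ} (ht : 0 < t) (hα : 0 < α) : StrictMonoOn (Et t α) (Ici √3) := by
  have hT : 0 < t ^ 2 * α := by positivity
  intro y hy z hz hyz
  have h3 : Ici √3 ⊆ Ici 1 := Ici_subset_Ici.2 (one_le_sqrt.2 (by norm_num))
  simp only [Et_eq_rhombTheta_add_rectTheta]
  exact add_lt_add (mul_lt_mul_of_pos_left (strictMonoOn_rhombTheta hα hy hz hyz) (theta2_pos hT))
    (mul_lt_mul_of_pos_left (strictMonoOn_rectTheta hα (h3 hy) (h3 hz) hyz)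
      (sub_pos.2 (theta2_lt_theta3 hT)))

/-- for all `t, α > 0`, `y ↦ E_t(y;α)` is strictly increasing on `[√3,∞)`;
consequently any minimizer over `[1,∞)` lies in `[1,√3]`. -/
theorem Et_strictMono_and_minimizer_location (t α : ℝ) (ht : 0 < t) (hα : 0 < α) :
    StrictMonoOn (fun y : ℝ => Et t α y) (Set.Ici (Real.sqrt 3)) ∧
    ∀ y₀ ∈ Set.Ici (1 : ℝ), (∀ y ∈ Set.Ici (1 : ℝ), Et t α y₀ ≤ Et t α y) →
      y₀ ∈ Set.Icc (1 : ℝ) (Real.sqrt 3) := by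
  have hmono := strictMonoOn_Et ht hα
  refine ⟨hmono, fun y₀ hy₀ hmin => ⟨hy₀, ?_⟩⟩
  by_contra! hlt
  exact (hmin √3 (one_le_sqrt.2 (by norm_num))).not_gt (hmono self_mem_Ici hlt.le hlt)
end

section
/- For t > 0, α > 0 and y ≥ 1 define E_t(y;α) = θ₃(t²α)·θ₃(yα)·θ₃(α/y) + θ₂(t²α)·θ₂(yα)·θ₂(α/y). Then for every α > 0 there exists t₀(α) > 0 such that for every t with 0 < t < t₀(α), y = 1 is not a minimizer of y ↦ E_t(y;α) on [1,+∞); that is, there exists y > 1 with E_t(y;α) < E_t(1;α). -/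
open scoped BigOperators

/-!
By Poisson summation `√x θ₂(x)` and `√x θ₃(x)` both tend to `1` as `x → 0`, so `t√α · E_t(y;α)`
tends to the theta function `F(y;α) = θ₃(yα)θ₃(α/y) + θ₂(yα)θ₂(α/y)` of a centred rectangular
planar lattice. This lattice is square for `y = 1` and hexagonal for `y = √3`, and the hexagonal
one has the smaller theta function.

Poisson summation also gives `√x θ₃(x) = θ₃(4/x) + θ₂(4/x)` and `√x θ₂(x) = θ₃(4/x) - θ₂(4/x)`,
whence `α F(y;α) = 2 F(y;4/α)`, and it suffices to compare at `α ≥ 2`. There, with `p = e^{-πα/2}`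
and `q = e^{-πα/√3}`, the shortest vectors contribute `4p` to `F(1;α)` and `6q` to `F(√3;α)`; as
`q ≤ (16/25) p`, the former is larger, and geometric series control the rest.
-/

open Real HurwitzZeta Filter Topology

section EvenKernel

lemma hasSum_nat_evenKernel (a : ℝ) {x : ℝ} (hx : 0 < x) :
    HasSum (fun n : ℕ ↦ exp (-π * (n + a) ^ 2 * x) + exp (-π * (n + (1 - a)) ^ 2 * x))
      (evenKernel a x) := by
  refine (hasSum_int_evenKernel a hx).nat_add_neg_add_one.congr_fun fun n ↦ ?_
  congr 3
  push_cast
  ring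

lemma exp_neg_pi_mul_natCast_add_sq_le {a x : ℝ} (ha : 0 ≤ a) (hx : 0 ≤ x) (n : ℕ) :
    exp (-π * (n + a) ^ 2 * x) ≤ exp (-π * a ^ 2 * x) * exp (-π * x) ^ n := by
  rw [← exp_nat_mul, ← exp_add, exp_le_exp]
  have hn : (n : ℝ) ≤ (n : ℝ) ^ 2 := mod_cast Nat.le_self_pow two_ne_zero n
  have hsq : a ^ 2 + n ≤ (n + a) ^ 2 := by nlinarith [mul_nonneg n.cast_nonneg ha]
  linarith [mul_le_mul_of_nonneg_left hsq (mul_nonneg pi_pos.le hx)]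

lemma le_evenKernel (a : ℝ) {x : ℝ} (hx : 0 < x) :
    exp (-π * a ^ 2 * x) + exp (-π * (1 - a) ^ 2 * x) ≤ evenKernel a x := by
  simpa only [Nat.cast_zero, zero_add] using
    le_hasSum (hasSum_nat_evenKernel a hx) 0 fun n _ ↦ by positivity

lemma exp_neg_pi_mul_lt_one {x : ℝ} (hx : 0 < x) : exp (-π * x) < 1 := by
  rw [exp_lt_one_iff, neg_mul, neg_lt_zero]
  positivity

lemma evenKernel_le {a x : ℝ} (ha₀ : 0 ≤ a) (ha₁ : a ≤ 1) (hx : 0 < x) :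
    evenKernel a x ≤
      (exp (-π * a ^ 2 * x) + exp (-π * (1 - a) ^ 2 * x)) / (1 - exp (-π * x)) := by
  rw [div_eq_mul_inv]
  refine hasSum_le (fun n ↦ ?_) (hasSum_nat_evenKernel a hx)
    ((hasSum_geometric_of_lt_one (exp_nonneg _) (exp_neg_pi_mul_lt_one hx)).mul_left _)
  rw [add_mul]
  exact add_le_add (exp_neg_pi_mul_natCast_add_sq_le ha₀ hx.le n)
    (exp_neg_pi_mul_natCast_add_sq_le (sub_nonneg.2 ha₁) hx.le n)

lemma evenKernel_div_sq (N : ℕ) [NeZero N] (a : ℝ) {x : ℝ} (hx : 0 < x) :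
    evenKernel a (x / N ^ 2) = ∑ r : Fin N, evenKernel (((r + a) / N : ℝ) : UnitAddCircle) x := by
  have hN : (N : ℝ) ≠ 0 := NeZero.ne _
  have hsum := (Int.divModEquiv N).symm.hasSum_iff.2
    (hasSum_int_evenKernel a (div_pos hx (sq_pos_of_ne_zero hN)))
  refine ((Equiv.prodComm (Fin N) ℤ).hasSum_iff.2 hsum).prod_fiberwise (fun r ↦ ?_)
    |>.unique (hasSum_fintype _)
  refine (hasSum_int_evenKernel ((r + a) / N) hx).congr_fun fun k ↦ ?_
  simp only [Function.comp_apply, Equiv.prodComm_apply, Prod.swap_prod_mk,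
    Int.divModEquiv_symm_apply]
  congr 1
  push_cast
  field_simp
  ring

lemma sqrt_mul_evenKernel (a : UnitAddCircle) {x : ℝ} (hx : 0 < x) :
    √x * evenKernel a x = cosKernel a (1 / x) := by
  rw [evenKernel_functional_equation, ← sqrt_eq_rpow]
  field_simp

lemma tendsto_cosKernel_atTop (a : UnitAddCircle) : Tendsto (cosKernel a) atTop (𝓝 1) := by
  obtain ⟨p, hp, hO⟩ := isBigO_atTop_cosKernel_sub a
  have hexp : Tendsto (fun x : ℝ ↦ exp (-p * x)) atTop (𝓝 0) :=
    tendsto_exp_atBot.comp (tendsto_id.const_mul_atTop_of_neg (neg_lt_zero.2 hp))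
  exact tendsto_sub_nhds_zero_iff.1 (hO.trans_tendsto hexp)

lemma tendsto_sqrt_mul_evenKernel (a : UnitAddCircle) :
    Tendsto (fun x ↦ √x * evenKernel a x) (𝓝[>] 0) (𝓝 1) := by
  refine ((tendsto_cosKernel_atTop a).comp tendsto_inv_nhdsGT_zero).congr' ?_
  filter_upwards [self_mem_nhdsWithin] with x hx
  rw [sqrt_mul_evenKernel a hx, one_div, Function.comp_apply]

end EvenKernel

section Theta

variable {x : ℝ}

lemma theta3_eq_evenKernel (hx : 0 < x) : theta3 x = evenKernel 0 x := by
  simpa [theta3] using (hasSum_int_evenKernel 0 hx).tsum_eq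

lemma theta2_eq_evenKernel (hx : 0 < x) : theta2 x = evenKernel ((1 / 2 : ℝ) : UnitAddCircle) x :=
  (hasSum_int_evenKernel (1 / 2) hx).tsum_eq

lemma one_le_theta3 (hx : 0 < x) : 1 ≤ theta3 x := by
  have h : 1 + exp (-π * x) ≤ theta3 x := by
    simpa [theta3_eq_evenKernel hx] using le_evenKernel 0 hx
  linarith [exp_pos (-π * x)]

lemma theta3_le (hx : 0 < x) : theta3 x ≤ (1 + exp (-π * x)) / (1 - exp (-π * x)) := by
  simpa [theta3_eq_evenKernel hx] using evenKernel_le le_rfl zero_le_one hx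

lemma le_theta2 (hx : 0 < x) : 2 * exp (-π * (x / 4)) ≤ theta2 x := by
  rw [theta2_eq_evenKernel hx]
  convert le_evenKernel (1 / 2) hx using 1
  ring_nf

lemma theta2_le (hx : 0 < x) : theta2 x ≤ 2 * exp (-π * (x / 4)) / (1 - exp (-π * x)) := by
  rw [theta2_eq_evenKernel hx]
  convert evenKernel_le (a := 1 / 2) (by norm_num) (by norm_num) hx using 2
  ring_nf

lemma theta3_div_four (hx : 0 < x) : theta3 (x / 4) = theta3 x + theta2 x := by
  rw [theta3_eq_evenKernel (by positivity), theta3_eq_evenKernel hx, theta2_eq_evenKernel hx]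
  convert evenKernel_div_sq 2 0 hx using 1
  · norm_num
  · simp [Fin.sum_univ_two]

lemma sqrt_mul_theta3 (hx : 0 < x) : √x * theta3 x = theta3 (4 / x) + theta2 (4 / x) := by
  rw [← theta3_div_four (by positivity), theta3_eq_evenKernel hx,
    theta3_eq_evenKernel (by positivity), sqrt_mul_evenKernel 0 hx,
    evenKernel_eq_cosKernel_of_zero]
  congr 1
  field_simp

lemma sqrt_mul_theta2 (hx : 0 < x) : √x * theta2 x = theta3 (4 / x) - theta2 (4 / x) := by
  have hquarter : √(x / 4) * theta3 (x / 4) = theta3 (4 / (x / 4)) + theta2 (4 / (x / 4)) :=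
    sqrt_mul_theta3 (by positivity)
  have hsqrt : √(x / 4) = √x / 2 := by
    rw [sqrt_div hx.le, show (4 : ℝ) = 2 ^ 2 by norm_num, sqrt_sq zero_le_two]
  rw [← theta3_div_four (by positivity), hsqrt, theta3_div_four hx,
    show 4 / (x / 4) / 4 = 4 / x by field_simp] at hquarter
  linarith [sqrt_mul_theta3 hx]

end Theta

section PlanarEnergy

/-- The theta function at `α` of the planar lattice generated by the rectangular lattice
`√y ℤ × (1/√y) ℤ` and the centre of its cell; this is the projection of `L_{y,t}` to its layers.
It is the square lattice for `y = 1` and the hexagonal one for `y = √3`. -/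
noncomputable def planarEnergy (α y : ℝ) : ℝ :=
  theta3 (y * α) * theta3 (α / y) + theta2 (y * α) * theta2 (α / y)

variable {α y : ℝ}

lemma planarEnergy_functional_equation (hα : 0 < α) (hy : 0 < y) :
    α * planarEnergy α y = 2 * planarEnergy (4 / α) y := by
  have hyα : 0 < y * α := by positivity
  have hαy : 0 < α / y := by positivity
  have hsqrt : √(y * α) * √(α / y) = α := by
    rw [← sqrt_mul hyα.le, show y * α * (α / y) = α ^ 2 by field_simp, sqrt_sq hα.le]
  have hyα' : 4 / (y * α) = 4 / α / y := by field_simp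
  have hαy' : 4 / (α / y) = y * (4 / α) := by field_simp
  calc α * planarEnergy α y
      = √(y * α) * √(α / y) * planarEnergy α y := by rw [hsqrt]
    _ = (√(y * α) * theta3 (y * α)) * (√(α / y) * theta3 (α / y)) +
          (√(y * α) * theta2 (y * α)) * (√(α / y) * theta2 (α / y)) := by rw [planarEnergy]; ring
    _ = 2 * planarEnergy (4 / α) y := by
      rw [sqrt_mul_theta3 hyα, sqrt_mul_theta3 hαy, sqrt_mul_theta2 hyα, sqrt_mul_theta2 hαy,
        hyα', hαy', planarEnergy]
      ring

lemma exp_mul_exp_eq_exp_add_inv (α y : ℝ) :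
    exp (-π * (y * α / 4)) * exp (-π * (α / y / 4)) = exp (-π * ((y + y⁻¹) * α / 4)) := by
  rw [← exp_add]
  ring_nf

lemma le_planarEnergy (hα : 0 < α) (hy : 0 < y) :
    1 + 4 * exp (-π * ((y + y⁻¹) * α / 4)) ≤ planarEnergy α y := by
  have hyα : 0 < y * α := by positivity
  have hαy : 0 < α / y := by positivity
  have h₃ : 1 ≤ theta3 (y * α) * theta3 (α / y) :=
    one_le_mul_of_one_le_of_one_le (one_le_theta3 hyα) (one_le_theta3 hαy)
  have h₂ := mul_le_mul (le_theta2 hyα) (le_theta2 hαy) (by positivity)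
    (le_trans (by positivity) (le_theta2 hyα))
  rw [planarEnergy, ← exp_mul_exp_eq_exp_add_inv]
  linarith

lemma planarEnergy_le (hα : 0 < α) (hy : 0 < y) :
    planarEnergy α y ≤
      ((1 + exp (-π * (y * α))) * (1 + exp (-π * (α / y))) +
          4 * exp (-π * ((y + y⁻¹) * α / 4))) /
        ((1 - exp (-π * (y * α))) * (1 - exp (-π * (α / y)))) := by
  have hyα : 0 < y * α := by positivity
  have hαy : 0 < α / y := by positivity
  have h₃ := mul_le_mul (theta3_le hyα) (theta3_le hαy)
    (zero_le_one.trans (one_le_theta3 hαy))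
    ((zero_le_one.trans (one_le_theta3 hyα)).trans (theta3_le hyα))
  have h₂_nonneg {x : ℝ} (hx : 0 < x) : 0 ≤ theta2 x := le_trans (by positivity) (le_theta2 hx)
  have h₂ := mul_le_mul (theta2_le hyα) (theta2_le hαy) (h₂_nonneg hαy)
    ((h₂_nonneg hyα).trans (theta2_le hyα))
  rw [planarEnergy, ← exp_mul_exp_eq_exp_add_inv]
  refine (add_le_add h₃ h₂).trans_eq ?_
  rw [div_mul_div_comm, div_mul_div_comm, ← add_div]
  ring

lemma hexagonal_bound_lt_square_bound {p q : ℝ} (hq : 0 < q) (hp : p ≤ 1 / 20)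
    (hqp : q ≤ 16 / 25 * p) :
    ((1 + q ^ 3) * (1 + q) + 4 * q) / ((1 - q ^ 3) * (1 - q)) < 1 + 4 * p := by
  have hq_sq : q ^ 2 ≤ 1 / 900 := by nlinarith
  have hq_cube : q ^ 3 ≤ q / 900 := by linarith [mul_le_mul_of_nonneg_left hq_sq hq.le]
  have hden : 29 / 30 ≤ (1 - q ^ 3) * (1 - q) := by nlinarith [pow_pos hq 4]
  have hp_den : 4 * p * (29 / 30) ≤ 4 * p * ((1 - q ^ 3) * (1 - q)) := by gcongr; linarith
  rw [div_lt_iff₀ (by linarith)]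
  linarith

lemma exp_neg_pi_mul_half_le_one_div_twenty (hα : 2 ≤ α) : exp (-π * (α / 2)) ≤ 1 / 20 := by
  have hexp : 20 ≤ exp 3 := by
    calc (20 : ℝ) ≤ 2.718 ^ 3 := by norm_num
      _ ≤ exp 1 ^ 3 := by gcongr; linarith [exp_one_gt_d9]
      _ = exp 3 := by rw [exp_one_pow]; norm_num
  calc exp (-π * (α / 2)) ≤ exp (-3) := exp_le_exp.2 (by nlinarith [pi_gt_three])
    _ ≤ 1 / 20 := by rw [exp_neg, ← one_div]; gcongr

lemma exp_neg_pi_mul_div_sqrt_three_le (hα : 2 ≤ α) :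
    exp (-π * (α / √3)) ≤ 16 / 25 * exp (-π * (α / 2)) := by
  have hsqrt : 1 / 2 + 77 / 1000 ≤ 1 / √3 := by
    rw [le_div_iff₀ (by positivity), ← le_div_iff₀' (by norm_num), sqrt_le_left (by norm_num)]
    norm_num
  have hexp : exp (-(462 / 1000)) ≤ 16 / 25 := by
    rw [exp_neg, inv_le_comm₀ (exp_pos _) (by norm_num)]
    exact le_trans (by norm_num) (quadratic_le_exp_of_nonneg (by norm_num))
  have hπα : 3 * 2 ≤ π * α := by gcongr; exact pi_gt_three.le
  calc exp (-π * (α / √3)) ≤ exp (-(462 / 1000) + -π * (α / 2)) := by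
        rw [exp_le_exp, show -π * (α / √3) = -(π * α * (1 / √3)) by ring]
        nlinarith
    _ = exp (-(462 / 1000)) * exp (-π * (α / 2)) := exp_add _ _
    _ ≤ 16 / 25 * exp (-π * (α / 2)) := by gcongr

lemma planarEnergy_sqrt_three_lt_of_two_le (hα : 2 ≤ α) :
    planarEnergy α √3 < planarEnergy α 1 := by
  have hα₀ : 0 < α := by linarith
  set p := exp (-π * (α / 2))
  set q := exp (-π * (α / √3))
  have hcube : exp (-π * (√3 * α)) = q ^ 3 := by
    rw [← exp_nat_mul]
    congr 1
    push_cast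
    field_simp
    norm_num
  have hexponent : (√3 + (√3)⁻¹) * α / 4 = α / √3 := by
    field_simp
    norm_num
  calc planarEnergy α √3
      ≤ ((1 + q ^ 3) * (1 + q) + 4 * q) / ((1 - q ^ 3) * (1 - q)) := by
        simpa only [hcube, hexponent] using planarEnergy_le hα₀ (sqrt_pos.2 three_pos)
    _ < 1 + 4 * p := hexagonal_bound_lt_square_bound (exp_pos _)
        (exp_neg_pi_mul_half_le_one_div_twenty hα) (exp_neg_pi_mul_div_sqrt_three_le hα)
    _ ≤ planarEnergy α 1 := by
        convert le_planarEnergy hα₀ one_pos using 5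
        ring

lemma planarEnergy_sqrt_three_lt (hα : 0 < α) : planarEnergy α √3 < planarEnergy α 1 := by
  rcases le_total 2 α with h | h
  · exact planarEnergy_sqrt_three_lt_of_two_le h
  · have hdual : 2 ≤ 4 / α := by
      rw [le_div_iff₀ hα]
      linarith
    refine lt_of_mul_lt_mul_left ?_ hα.le
    rw [planarEnergy_functional_equation hα one_pos,
      planarEnergy_functional_equation hα (sqrt_pos.2 three_pos)]
    linarith [planarEnergy_sqrt_three_lt_of_two_le hdual]

lemma tendsto_sqrt_mul_Et (hα : 0 < α) (y : ℝ) :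
    Tendsto (fun t ↦ √(t ^ 2 * α) * Et t α y) (𝓝[>] 0) (𝓝 (planarEnergy α y)) := by
  have hscale : Tendsto (fun t : ℝ ↦ t ^ 2 * α) (𝓝[>] 0) (𝓝[>] 0) := by
    refine tendsto_nhdsWithin_iff.2 ⟨?_, ?_⟩
    · exact tendsto_nhdsWithin_of_tendsto_nhds (Continuous.tendsto' (by fun_prop) _ _ (by simp))
    · filter_upwards [self_mem_nhdsWithin] with t (ht : 0 < t)
      exact Set.mem_Ioi.2 (by positivity)
  have h₃ := ((tendsto_sqrt_mul_evenKernel 0).comp hscale).mul_const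
    (theta3 (y * α) * theta3 (α / y))
  have h₂ := ((tendsto_sqrt_mul_evenKernel ((1 / 2 : ℝ) : UnitAddCircle)).comp hscale).mul_const
    (theta2 (y * α) * theta2 (α / y))
  have hsum := h₃.add h₂
  rw [one_mul, one_mul, ← planarEnergy] at hsum
  refine hsum.congr' ?_
  filter_upwards [self_mem_nhdsWithin] with t (ht : 0 < t)
  have ht' : 0 < t ^ 2 * α := by positivity
  rw [Function.comp_apply, Function.comp_apply, ← theta3_eq_evenKernel ht',
    ← theta2_eq_evenKernel ht', Et]
  ring

end PlanarEnergy

/-- for every `α > 0` there is `t₀(α) > 0` such that for all `0 < t < t₀(α)`,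
`y = 1` is not a minimizer of `y ↦ E_t(y;α)` on `[1,∞)`: some `y > 1` has strictly smaller
energy. -/
theorem one_not_minimizer_for_small_t (α : ℝ) (hα : 0 < α) :
    ∃ t₀ : ℝ, 0 < t₀ ∧ ∀ t : ℝ, 0 < t → t < t₀ →
      ∃ y : ℝ, 1 < y ∧ Et t α y < Et t α 1 := by
  have h : ∀ᶠ t in 𝓝[>] 0, √(t ^ 2 * α) * Et t α √3 < √(t ^ 2 * α) * Et t α 1 :=
    (tendsto_sqrt_mul_Et hα √3).eventually_lt (tendsto_sqrt_mul_Et hα 1)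
      (planarEnergy_sqrt_three_lt hα)
  obtain ⟨t₀, ht₀, hlt⟩ := mem_nhdsGT_iff_exists_Ioo_subset.1 h
  refine ⟨t₀, ht₀, fun t ht htt₀ ↦ ⟨√3, by norm_num [lt_sqrt], ?_⟩⟩
  exact lt_of_mul_lt_mul_left (hlt ⟨ht, htt₀⟩) (sqrt_nonneg _)
end
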